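/- arXiv:2207.10272 — 2 statements merged into one kernel-verified Lean document; each statement's English description precedes it below -/
import Mathlib

section
/- Let −3 < γ ≤ 1. (i) There exists a constant c > 0 independent of k such that for every real k > max{3, 3+γ} there is C_k > 0 with ∫_{ℝ³}∫_{S²} |v−v*|^γ ⟨v⟩^k ⟨v'⟩^{−k} e^{−|v*'|²/2} dσ dv* ≤ c k^{−(γ+3)/4} ⟨v⟩^γ + C_k ⟨v⟩^{γ−2} for all v ∈ ℝ³. (ii) For every real k > max{3, 3+γ} and every η > 0 there exists ε₀ ∈ (0,1) such that for all ε ∈ (0, ε₀) and all v ∈ ℝ³, ∫_{ℝ³}∫_{S²} 1_{{|v−v'| > ⟨v⟩/ε or |v−v'| < ε⟨v⟩}} |v−v*|^γ ⟨v⟩^k ⟨v'⟩^{−k} e^{−|v*'|²/2} dσ dv* ≤ η ⟨v⟩^γ. (iii) For every real k > max{3, 3+γ} there is C_k > 0 with ∫_{ℝ³}∫_{S²} |v−v*|^γ ⟨v⟩^k ⟨v'⟩^{−k−2} e^{−|v*'|²/2} dσ dv* ≤ C_k ⟨v⟩^{γ−2} for all v ∈ ℝ³. -/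
/-!
Write `v'`, `v*'` for the post-collision velocities of `v`, `v*`. The vectors `v - v'` and `v - v*'`
are orthogonal, so `⟨v'⟩² ≥ ⟨v⟩² + ‖v - v'‖²/2 - 2‖v*'‖²`. With `x = ‖v - v'‖²/(2⟨v⟩²)` this bounds
`(⟨v⟩/⟨v'⟩)^k` by a multiple of `(1+x)^{-k/2}`. The multiple is at most `e³` where
`‖v*'‖² ≤ ⟨v⟩²/k`; elsewhere part of the Gaussian in `v*'` turns it into `C_k ⟨v⟩^{-2}`
(`pointwise_bound`).

It remains to integrate `|v-v*|^γ e^{-‖v*'‖²/4} h(x)`. For fixed `σ` the map `v* ↦ u = v - v*'` is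
inverted explicitly by `preRel`, with Jacobian `4‖u‖²/⟪u,σ⟫²` (`lintegral_preRel`). The angular
integral then only depends on the angle between `u` and `σ`, and becomes a one-dimensional integral in
`x` (`lintegral_zonal`, `angular_bound`), so that the whole is at most a constant times
`⟨v⟩^{(γ+3)/2} · (e^{-|·|²/4} * |·|^{(γ-3)/2})(v) · ∫₀^∞ x^{-(1-γ)/4} h(x) dx` (`core_bound`). Since
`-3 < (γ-3)/2 ≤ 0`, the convolution is `O(⟨v⟩^{(γ-3)/2})` (`potential_bound`), and the two powers of
`⟨v⟩` multiply to `⟨v⟩^γ` (`weighted_bound`).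

For `h(x) = (1+x)^{-k/2}` the last integral is `O(k^{-(γ+3)/4})` with a constant independent of `k`
(`weight_integral`), which is (i). Restricting `h` to very small and very large `x` makes it
arbitrarily small, by finiteness of the integral (`small_tail`), which is (ii). Part (iii) is (i) for
`k + 2` multiplied by `⟨v⟩^{-2}`.
-/

open MeasureTheory Real
open scoped ENNReal RealInnerProductSpace Classical

noncomputable section

/-- velocity space ℝ³ -/
abbrev E3 : Type := EuclideanSpace ℝ (Fin 3)

/-- the unit sphere 𝕊² ⊆ ℝ³ -/
abbrev S2 : Type := Metric.sphere (0 : E3) 1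

/-- surface measure on the unit sphere -/
noncomputable instance : MeasureSpace S2 := ⟨(volume : Measure E3).toSphere⟩

/-- Japanese bracket ⟨v⟩ = √(1+|v|²). -/
def jap (v : E3) : ℝ := Real.sqrt (1 + ‖v‖ ^ 2)

/-- Post-collision velocity v' = (v+v*)/2 + (|v-v*|/2)σ. -/
def vP (v w : E3) (σ : S2) : E3 := (2⁻¹ : ℝ) • (v + w) + (‖v - w‖ / 2) • (σ : E3)

/-- Post-collision velocity v*' = (v+v*)/2 - (|v-v*|/2)σ. -/
def vsP (v w : E3) (σ : S2) : E3 := (2⁻¹ : ℝ) • (v + w) - (‖v - w‖ / 2) • (σ : E3)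

/-- cos θ = ((v-v*)/|v-v*|)·σ. -/
def cosTheta (v w : E3) (σ : S2) : ℝ := ⟪v - w, (σ : E3)⟫ / ‖v - w‖

/-- sin(θ/2) = √((1-cos θ)/2). -/
def sinHalf (v w : E3) (σ : S2) : ℝ := Real.sqrt ((1 - cosTheta v w σ) / 2)

/-- cos(θ/2) = √((1+cos θ)/2). -/
def cosHalf (v w : E3) (σ : S2) : ℝ := Real.sqrt ((1 + cosTheta v w σ) / 2)

/-- a fixed reference unit direction, used to express rotation-invariant angular integrals -/
def e1 : E3 := EuclideanSpace.single 0 1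

/-- cos θ for the deviation angle of σ relative to the fixed direction `e1` -/
def cos1 (σ : S2) : ℝ := ⟪e1, (σ : E3)⟫

def sinHalf1 (σ : S2) : ℝ := Real.sqrt ((1 - cos1 σ) / 2)

def cosHalf1 (σ : S2) : ℝ := Real.sqrt ((1 + cos1 σ) / 2)

/-- the standard Maxwellian μ(v) = (2π)^{-3/2} e^{-|v|²/2} -/
def maxw (v : E3) : ℝ := (2 * π) ^ (-(3 : ℝ) / 2) * Real.exp (-‖v‖ ^ 2 / 2)

/-- Grad's angular cutoff assumption (A2): `bf` is measurable, nonnegative,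
`K ≤ bf ≤ K⁻¹` on `[0,1]` for some `K > 0`, and `bf` vanishes on negatives. -/
def gradCutoff (bf : ℝ → ℝ) : Prop :=
  Measurable bf ∧ (∀ t, 0 ≤ bf t) ∧
    (∃ K : ℝ, 0 < K ∧ ∀ t ∈ Set.Icc (0 : ℝ) 1, K ≤ bf t ∧ bf t ≤ K⁻¹) ∧
    ∀ t : ℝ, t < 0 → bf t = 0

/-- gain operator Q⁺ -/
def Qgain (γ : ℝ) (bf : ℝ → ℝ) (f g : E3 → ℝ) (v : E3) : ℝ :=
  ∫ w : E3, ∫ σ : S2, ‖v - w‖ ^ γ * bf (cosTheta v w σ) * (f (vsP v w σ) * g (vP v w σ))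

/-- loss operator Q⁻ -/
def Qloss (γ : ℝ) (bf : ℝ → ℝ) (f g : E3 → ℝ) (v : E3) : ℝ :=
  ∫ w : E3, ∫ σ : S2, ‖v - w‖ ^ γ * bf (cosTheta v w σ) * (f w * g v)

/-- the Boltzmann collision operator Q = Q⁺ - Q⁻ -/
def Qcol (γ : ℝ) (bf : ℝ → ℝ) (f g : E3 → ℝ) (v : E3) : ℝ :=
  ∫ w : E3, ∫ σ : S2, ‖v - w‖ ^ γ * bf (cosTheta v w σ) *
    (f (vsP v w σ) * g (vP v w σ) - f w * g v)

/-- collision frequency ν(v) -/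
def nuF (γ : ℝ) (bf : ℝ → ℝ) (v : E3) : ℝ :=
  ∫ w : E3, ∫ σ : S2, ‖v - w‖ ^ γ * bf (cosTheta v w σ) * maxw w

/-- squared weighted norm ‖f‖²_{L²_q} -/
def wSqR (q : ℝ) (f : E3 → ℝ) : ℝ := ∫ v : E3, f v ^ 2 * jap v ^ (2 * q)

/-- weighted norm ‖f‖_{L²_q} -/
def wNorm (q : ℝ) (f : E3 → ℝ) : ℝ := Real.sqrt (wSqR q f)

/-- squared star norm ‖f‖²_{L²_{k+γ/2,*}} = ∫∫ μ(v*)|v-v*|^γ f(v)² ⟨v⟩^{2k} -/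
def starSq (γ k : ℝ) (f : E3 → ℝ) : ℝ :=
  ∫ v : E3, ∫ w : E3, maxw w * ‖v - w‖ ^ γ * f v ^ 2 * jap v ^ (2 * k)

/-- star norm ‖f‖_{L²_{k+γ/2,*}} -/
def starNorm (γ k : ℝ) (f : E3 → ℝ) : ℝ := Real.sqrt (starSq γ k f)

/-- squared exponentially weighted norm ‖f‖²_{L²_{q,a,b}} -/
def expSq (q a b : ℝ) (f : E3 → ℝ) : ℝ :=
  ∫ v : E3, f v ^ 2 * jap v ^ (2 * q) * Real.exp (2 * a * jap v ^ b)

/-- exponentially weighted norm ‖f‖_{L²_{q,a,b}} -/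
def expNorm (q a b : ℝ) (f : E3 → ℝ) : ℝ := Real.sqrt (expSq q a b f)

/-! ### Polar coordinates and the surface measure -/

theorem volume_S2_eq : (volume : Measure S2) = (volume : Measure E3).toSphere := rfl

instance : IsFiniteMeasure (volume : Measure S2) := by
  rw [volume_S2_eq]; infer_instance

/-- Polar coordinates for lower integrals; no integrability is required. -/
theorem lintegral_polar (G : E3 → ℝ≥0∞) (hG : Measurable G) :
    ∫⁻ x : E3, G x = ∫⁻ σ : S2, ∫⁻ r in Set.Ioi (0 : ℝ),
      ENNReal.ofReal (r ^ 2) * G (r • (σ : E3)) := by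
  have hmp := (volume : Measure E3).measurePreserving_homeomorphUnitSphereProd
  have h1 : ∫⁻ x : E3, G x = ∫⁻ x : ({0}ᶜ : Set E3), G x.1 ∂((volume : Measure E3).comap (↑)) := by
    rw [lintegral_subtype_comap (MeasurableSet.singleton 0).compl, restrict_compl_singleton]
  have h2 : ∫⁻ x : ({0}ᶜ : Set E3), G x.1 ∂((volume : Measure E3).comap (↑))
      = ∫⁻ p : S2 × Set.Ioi (0 : ℝ), G ((p.2 : ℝ) • (p.1 : E3))
        ∂((volume : Measure E3).toSphere.prod
          (Measure.volumeIoiPow (Module.finrank ℝ E3 - 1))) := by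
    rw [← hmp.lintegral_comp_emb (Homeomorph.measurableEmbedding _)]
    refine lintegral_congr fun x => ?_
    have hx : ‖(x : E3)‖ ≠ 0 := fun h => x.2 (by simpa using h)
    simp [smul_smul, hx]
  have hmeas : Measurable fun p : S2 × Set.Ioi (0 : ℝ) => G ((p.2 : ℝ) • (p.1 : E3)) := by
    apply hG.comp
    fun_prop
  rw [h1, h2, lintegral_prod _ hmeas.aemeasurable, volume_S2_eq]
  refine lintegral_congr fun σ => ?_
  have hfr : Module.finrank ℝ E3 - 1 = 2 := by simp
  rw [hfr, Measure.volumeIoiPow, lintegral_withDensity_eq_lintegral_mul _ (by fun_prop)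
    (by apply hG.comp; fun_prop)]
  simp only [Pi.mul_apply]
  rw [lintegral_subtype_comap measurableSet_Ioi
    (fun r : ℝ => ENNReal.ofReal (r ^ 2) * G (r • (σ : E3)))]

/-- The substitution `q = r²/c`. -/
theorem lintegral_sq_sub (c : ℝ) (hc : 0 < c) (F : ℝ → ℝ≥0∞) :
    ∫⁻ r in Set.Ioi (0 : ℝ), ENNReal.ofReal r * F (r ^ 2 / c)
      = ENNReal.ofReal (c / 2) * ∫⁻ q in Set.Ioi (0 : ℝ), F q := by
  have himg : (fun r : ℝ => r ^ 2 / c) '' Set.Ioi 0 = Set.Ioi 0 := by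
    ext q
    simp only [Set.mem_image, Set.mem_Ioi]
    constructor
    · rintro ⟨r, hr, rfl⟩; positivity
    · intro hq
      refine ⟨√(c * q), by positivity, ?_⟩
      rw [Real.sq_sqrt (by positivity)]; field_simp
  have hinj : Set.InjOn (fun r : ℝ => r ^ 2 / c) (Set.Ioi 0) := by
    intro a ha b hb hab
    simp only [Set.mem_Ioi] at ha hb
    have : a ^ 2 = b ^ 2 := by
      simpa [div_left_inj' hc.ne'] using hab
    exact (pow_left_inj₀ ha.le hb.le two_ne_zero).1 this
  have := lintegral_image_eq_lintegral_abs_deriv_mul (s := Set.Ioi (0 : ℝ)) measurableSet_Ioi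
    (f := fun r : ℝ => r ^ 2 / c) (f' := fun r => 2 * r / c)
    (fun r _ => by
      have := ((hasDerivAt_pow 2 r).div_const c).hasDerivWithinAt (s := Set.Ioi 0)
      simpa using this) hinj F
  rw [himg] at this
  rw [this, ← lintegral_const_mul' _ _ ENNReal.ofReal_ne_top]
  refine setLIntegral_congr_fun measurableSet_Ioi fun r hr => ?_
  simp only [Set.mem_Ioi] at hr
  rw [← mul_assoc, ← ENNReal.ofReal_mul (by positivity), abs_of_pos (by positivity)]
  congr 2
  field_simp

/-! ### Zonal integrals on the sphere -/

/-- In an orthonormal basis starting with `e`, an integrand depending only on `⟪e, x⟫` and `‖x‖`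
becomes an integral over `ℝ × ℝ²`. -/
theorem lintegral_E3_coords (e : E3) (he : ‖e‖ = 1) (H : ℝ → ℝ → ℝ≥0∞)
    (hH : Measurable fun p : ℝ × ℝ => H p.1 p.2) :
    ∫⁻ x : E3, H ⟪e, x⟫ (‖x‖ ^ 2) =
      ∫⁻ a : ℝ, ∫⁻ p : ℝ × ℝ, H a (a ^ 2 + (p.1 ^ 2 + p.2 ^ 2)) := by
  obtain ⟨b, hb⟩ : ∃ b : OrthonormalBasis (Fin 3) ℝ E3, b 0 = e := by
    have h : Orthonormal ℝ (({0} : Set (Fin 3)).domRestrict (fun _ => e)) := by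
      constructor
      · intro i; exact he
      · intro i j hij
        exact absurd (Subsingleton.elim i j) hij
    obtain ⟨b, hb⟩ := h.exists_orthonormalBasis_extension_of_card_eq (by simp)
    exact ⟨b, hb 0 rfl⟩
  have m1 := b.measurePreserving_repr_symm
  rw [← m1.lintegral_comp_emb b.repr.symm.toHomeomorph.measurableEmbedding]
  have h1 : ∀ y : E3, H ⟪e, b.repr.symm y⟫ (‖b.repr.symm y‖ ^ 2) = H (y 0) (‖y‖ ^ 2) := by
    intro y
    rw [← hb, LinearIsometryEquiv.norm_map, ← b.repr_apply_apply,
      LinearIsometryEquiv.apply_symm_apply]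
  simp_rw [h1]
  have m2 := EuclideanSpace.volume_preserving_symm_measurableEquiv_toLp (Fin 3)
  have m3 := (volume_preserving_piFinSuccAbove (fun _ : Fin 3 => ℝ) 0).symm
  have m4 := (volume_preserving_finTwoArrow ℝ).symm
  rw [← m2.symm.lintegral_comp_emb (MeasurableEquiv.measurableEmbedding _),
    ← m3.lintegral_comp_emb (MeasurableEquiv.measurableEmbedding _)]
  have h2 : ∀ a : ℝ × (Fin 2 → ℝ), H
        (((MeasurableEquiv.toLp 2 (Fin 3 → ℝ)).symm.symm
          ((MeasurableEquiv.piFinSuccAbove (fun _ => ℝ) 0).symm a)).ofLp 0)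
        (‖(MeasurableEquiv.toLp 2 (Fin 3 → ℝ)).symm.symm
          ((MeasurableEquiv.piFinSuccAbove (fun _ => ℝ) 0).symm a)‖ ^ 2) =
        H a.1 (a.1 ^ 2 + (a.2 0 ^ 2 + a.2 1 ^ 2)) := by
    intro a
    congr 1
    rw [EuclideanSpace.norm_sq_eq, Fin.sum_univ_succ, Fin.sum_univ_two]
    simp only [Real.norm_eq_abs, sq_abs]
    rfl
  have h3 : Measurable fun a : ℝ × (Fin 2 → ℝ) =>
      H a.1 (a.1 ^ 2 + (a.2 0 ^ 2 + a.2 1 ^ 2)) :=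
    hH.comp (g := fun p : ℝ × ℝ => H p.1 p.2)
      (f := fun a : ℝ × (Fin 2 → ℝ) => (a.1, a.1 ^ 2 + (a.2 0 ^ 2 + a.2 1 ^ 2))) (by fun_prop)
  refine (lintegral_congr h2).trans ?_
  rw [Measure.volume_eq_prod, lintegral_prod _ h3.aemeasurable]
  refine lintegral_congr fun a => ?_
  rw [← m4.lintegral_comp_emb (MeasurableEquiv.measurableEmbedding _)]
  rfl

theorem lintegral_plane (c : ℝ) (hc : 0 < c) (F : ℝ → ℝ≥0∞) (hF : Measurable F) :
    ∫⁻ p : ℝ × ℝ, F ((p.1 ^ 2 + p.2 ^ 2) / c) =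
      ENNReal.ofReal (π * c) * ∫⁻ q in Set.Ioi (0 : ℝ), F q := by
  rw [← lintegral_comp_polarCoord_symm]
  have h1 : ∀ p : ℝ × ℝ, ((polarCoord.symm p).1 ^ 2 + (polarCoord.symm p).2 ^ 2) = p.1 ^ 2 := by
    intro p
    simp only [polarCoord_symm_apply]
    linear_combination p.1 ^ 2 * Real.sin_sq_add_cos_sq p.2
  simp_rw [h1, polarCoord_target, smul_eq_mul]
  rw [Measure.volume_eq_prod, ← Measure.prod_restrict]
  have := lintegral_prod_mul (μ := volume.restrict (Set.Ioi (0:ℝ)))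
    (ν := volume.restrict (Set.Ioo (-π) π))
    (f := fun r => ENNReal.ofReal r * F (r ^ 2 / c)) (g := fun _ => 1)
    (by fun_prop) (by fun_prop)
  simp only [mul_one] at this
  rw [this, lintegral_sq_sub c hc F, lintegral_one, Measure.restrict_apply_univ, Real.volume_Ioo,
    mul_right_comm, ← ENNReal.ofReal_mul (by positivity)]
  congr 2
  ring

theorem lintegral_Ioo_sq (b : ℝ) (hb : 0 ≤ b) :
    ∫⁻ r in Set.Ioo (0 : ℝ) b, ENNReal.ofReal (r ^ 2) = ENNReal.ofReal (b ^ 3 / 3) := by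
  rw [Measure.restrict_congr_set Ioo_ae_eq_Ioc,
    ← ofReal_integral_eq_lintegral_ofReal (intervalIntegral.intervalIntegrable_pow 2).1
      (Filter.Eventually.of_forall fun _ => sq_nonneg _),
    ← intervalIntegral.integral_of_le hb, integral_pow]
  norm_num

/-- A zonal integral over the half-sphere, with `t = ⟪e, σ⟫` and the substitution `q = 1/t² - 1`.
Both sides are read off from `∫ F(‖x‖²/⟪e,x⟫² - 1)` over the slab `0 < ⟪e,x⟫ < 1`, computed once in
polar coordinates and once slice by slice; this avoids parametrizing the sphere. -/
theorem lintegral_zonal (e : E3) (he : ‖e‖ = 1) (F : ℝ → ℝ≥0∞) (hF : Measurable F) :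
    ∫⁻ σ : S2, (if 0 < ⟪e, (σ : E3)⟫ then
        ENNReal.ofReal ((⟪e, (σ : E3)⟫ ^ 3)⁻¹) * F (1 / ⟪e, (σ : E3)⟫ ^ 2 - 1) else 0) =
      ENNReal.ofReal π * ∫⁻ q in Set.Ioi (0 : ℝ), F q := by
  set H : ℝ → ℝ → ℝ≥0∞ := fun a s => if a ∈ Set.Ioo (0 : ℝ) 1 then F (s / a ^ 2 - 1) else 0
    with hHdef
  have hH : Measurable fun p : ℝ × ℝ => H p.1 p.2 := by
    apply Measurable.ite (measurable_fst measurableSet_Ioo) _ measurable_const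
    apply hF.comp
    fun_prop
  have key := lintegral_E3_coords e he H hH
  have hR : ∫⁻ a : ℝ, ∫⁻ p : ℝ × ℝ, H a (a ^ 2 + (p.1 ^ 2 + p.2 ^ 2)) =
      ENNReal.ofReal (1 / 3) * (ENNReal.ofReal π * ∫⁻ q in Set.Ioi (0 : ℝ), F q) := by
    have h1 : ∀ a : ℝ, ∫⁻ p : ℝ × ℝ, H a (a ^ 2 + (p.1 ^ 2 + p.2 ^ 2)) =
        (Set.Ioo (0 : ℝ) 1).indicator (fun a => ENNReal.ofReal (a ^ 2) *
          (ENNReal.ofReal π * ∫⁻ q in Set.Ioi (0 : ℝ), F q)) a := by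
      intro a
      by_cases ha : a ∈ Set.Ioo (0 : ℝ) 1
      · have ha0 : 0 < a ^ 2 := by have := ha.1; positivity
        simp only [hHdef, if_pos ha, Set.indicator_of_mem ha]
        have h2 : ∀ p : ℝ × ℝ, (a ^ 2 + (p.1 ^ 2 + p.2 ^ 2)) / a ^ 2 - 1 =
            (p.1 ^ 2 + p.2 ^ 2) / a ^ 2 := by
          intro p
          have := ha.1.ne'
          field_simp
          ring
        simp_rw [h2]
        rw [lintegral_plane _ ha0 F hF, ← mul_assoc, ← ENNReal.ofReal_mul (by positivity),
          mul_comm π]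
      · simp only [hHdef, if_neg ha, Set.indicator_of_notMem ha, lintegral_zero]
    simp_rw [h1]
    rw [lintegral_indicator measurableSet_Ioo, lintegral_mul_const _ (by fun_prop),
      lintegral_Ioo_sq 1 zero_le_one]
    norm_num
  have hGm : Measurable fun x : E3 => H ⟪e, x⟫ (‖x‖ ^ 2) :=
    hH.comp (g := fun p : ℝ × ℝ => H p.1 p.2)
      (f := fun x : E3 => (⟪e, x⟫, ‖x‖ ^ 2)) (by fun_prop)
  have hL : ∫⁻ x : E3, H ⟪e, x⟫ (‖x‖ ^ 2) = ENNReal.ofReal (1 / 3) *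
      ∫⁻ σ : S2, (if 0 < ⟪e, (σ : E3)⟫ then
        ENNReal.ofReal ((⟪e, (σ : E3)⟫ ^ 3)⁻¹) * F (1 / ⟪e, (σ : E3)⟫ ^ 2 - 1) else 0) := by
    rw [lintegral_polar _ hGm, ← lintegral_const_mul' _ _ ENNReal.ofReal_ne_top]
    refine lintegral_congr fun σ => ?_
    have hσ : ‖(σ : E3)‖ = 1 := by simp
    set t := ⟪e, (σ : E3)⟫ with ht
    by_cases h0 : 0 < t
    · rw [if_pos h0]
      have h3 : ∀ r ∈ Set.Ioi (0 : ℝ), ENNReal.ofReal (r ^ 2) *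
          H ⟪e, r • (σ : E3)⟫ (‖r • (σ : E3)‖ ^ 2) =
          (Set.Iio (1 / t)).indicator
            (fun r => ENNReal.ofReal (r ^ 2) * F (1 / t ^ 2 - 1)) r := by
        intro r hr
        have hr : 0 < r := hr
        rw [inner_smul_right, norm_smul, hσ, mul_one, ← ht, Real.norm_eq_abs, sq_abs]
        by_cases hrt : r < 1 / t
        · have : r * t < 1 := by rwa [lt_div_iff₀ h0] at hrt
          simp only [hHdef]
          rw [if_pos ⟨by positivity, this⟩, Set.indicator_of_mem (by exact hrt)]
          congr 3
          field_simp
        · have : ¬ r * t < 1 := by rwa [lt_div_iff₀ h0] at hrt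
          simp only [hHdef]
          rw [if_neg (fun h => this h.2), Set.indicator_of_notMem (by exact hrt), mul_zero]
      rw [setLIntegral_congr_fun measurableSet_Ioi h3, lintegral_indicator measurableSet_Iio,
        Measure.restrict_restrict measurableSet_Iio, Set.inter_comm, Set.Ioi_inter_Iio,
        lintegral_mul_const _ (by fun_prop), lintegral_Ioo_sq _ (by positivity), ← mul_assoc,
        ← ENNReal.ofReal_mul (by positivity)]
      congr 2
      field_simp
    · rw [if_neg h0, mul_zero]
      have h3 : ∀ r ∈ Set.Ioi (0 : ℝ), ENNReal.ofReal (r ^ 2) *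
          H ⟪e, r • (σ : E3)⟫ (‖r • (σ : E3)‖ ^ 2) = 0 := by
        intro r hr
        have hr : 0 < r := hr
        have : ¬ 0 < r * t := by
          rw [mul_pos_iff_of_pos_left hr]; exact h0
        simp only [hHdef, inner_smul_right, ← ht]
        rw [if_neg (fun h => this h.1), mul_zero]
      rw [setLIntegral_congr_fun measurableSet_Ioi h3]
      simp
  rw [hL, hR] at key
  exact (ENNReal.mul_right_inj (by simp) ENNReal.ofReal_ne_top).1 key

/-! ### The collision change of variables at fixed direction -/

/-- The relative velocity `z = v - v*` recovered from `u = v - v*' = (z + ‖z‖σ)/2` at fixed `σ`.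
It inverts that map on the half-space `⟪u, σ⟫ > 0`, and is a junk value elsewhere. -/
def preRel (σ u : E3) : E3 := (2 : ℝ) • u - (‖u‖ ^ 2 / ⟪u, σ⟫) • σ

theorem norm_preRel (σ u : E3) (hσ : ‖σ‖ = 1) (hu : 0 < ⟪u, σ⟫) :
    ‖preRel σ u‖ = ‖u‖ ^ 2 / ⟪u, σ⟫ := by
  have h : ‖preRel σ u‖ ^ 2 = (‖u‖ ^ 2 / ⟪u, σ⟫) ^ 2 := by
    rw [preRel, norm_sub_sq_real, norm_smul, norm_smul, hσ, inner_smul_left, inner_smul_right]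
    simp only [Real.norm_eq_abs, mul_one, mul_pow, sq_abs, conj_trivial]
    field_simp
    ring
  exact (pow_left_inj₀ (norm_nonneg _) (by positivity) two_ne_zero).1 h

theorem preRel_inv (σ u : E3) (hσ : ‖σ‖ = 1) (hu : 0 < ⟪u, σ⟫) :
    (2⁻¹ : ℝ) • (preRel σ u + ‖preRel σ u‖ • σ) = u := by
  rw [norm_preRel σ u hσ hu, preRel, sub_add_cancel, smul_smul]
  norm_num

/-- The derivative of `preRel σ` is twice the identity minus a rank-one map. -/
theorem det_sub_rankOne (ψ : E3 →L[ℝ] ℝ) (σ : E3) :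
    ((2 : ℝ) • ContinuousLinearMap.id ℝ E3 - ψ.smulRight σ).det = 8 - 4 * ψ σ := by
  have h : (((2 : ℝ) • ContinuousLinearMap.id ℝ E3 - ψ.smulRight σ : E3 →L[ℝ] E3) :
      E3 →ₗ[ℝ] E3) = (2 : ℝ) • LinearMap.transvection (-(2⁻¹ : ℝ) • (ψ : E3 →ₗ[ℝ] ℝ)) σ := by
    ext1 x
    simp [LinearMap.transvection, smul_smul, sub_eq_add_neg]
  rw [ContinuousLinearMap.det, h, LinearMap.det_smul, LinearMap.transvection.det]
  simp
  ring

/-- Change of variables `z ↦ u = (z + ‖z‖σ)/2`. The image of the half-space is everything but a set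
of measure zero inside the line spanned by `σ`. -/
theorem lintegral_preRel (σ : E3) (hσ : ‖σ‖ = 1) (G : E3 → ℝ≥0∞) :
    ∫⁻ z, G z = ∫⁻ u in {u : E3 | 0 < ⟪u, σ⟫},
      ENNReal.ofReal (4 * (‖u‖ ^ 2 / ⟪u, σ⟫ ^ 2)) * G (preRel σ u) := by
  set s : Set E3 := {u : E3 | 0 < ⟪u, σ⟫} with hs
  have hsm : MeasurableSet s := measurableSet_lt measurable_const (by fun_prop)
  have himg : preRel σ '' s =ᵐ[volume] (Set.univ : Set E3) := by
    rw [ae_eq_univ]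
    have hne : (ℝ ∙ σ) ≠ (⊤ : Submodule ℝ E3) := by
      intro h
      have h1 := finrank_span_singleton (K := ℝ) (v := σ) (by rintro rfl; simp at hσ)
      rw [h] at h1
      simp at h1
    refine measure_mono_null ?_ (Measure.addHaar_submodule volume (ℝ ∙ σ) hne)
    intro z hz
    by_contra hzσ
    apply hz
    have hne : z + ‖z‖ • σ ≠ 0 := by
      intro h0
      apply hzσ
      rw [eq_neg_of_add_eq_zero_left h0, ← neg_smul]
      exact Submodule.smul_mem _ _ (Submodule.mem_span_singleton_self σ)
    have hsq : ‖z + ‖z‖ • σ‖ ^ 2 = 2 * ‖z‖ * (‖z‖ + ⟪z, σ⟫) := by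
      rw [norm_add_sq_real, norm_smul, hσ, inner_smul_right, Real.norm_eq_abs, mul_one, sq_abs]
      ring
    have hpos : 0 < 2 * ‖z‖ * (‖z‖ + ⟪z, σ⟫) := by
      rw [← hsq]; have := norm_pos_iff.2 hne; positivity
    have hz0 : 0 < ‖z‖ := by
      rcases (norm_nonneg z).eq_or_lt with h | h
      · rw [← h] at hpos; simp at hpos
      · exact h
    have hp2 : 0 < ‖z‖ + ⟪z, σ⟫ := by
      by_contra hcon
      have : 2 * ‖z‖ * (‖z‖ + ⟪z, σ⟫) ≤ 0 :=
        mul_nonpos_of_nonneg_of_nonpos (by positivity) (not_lt.1 hcon)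
      linarith
    have hin : ⟪(2⁻¹ : ℝ) • (z + ‖z‖ • σ), σ⟫ = (‖z‖ + ⟪z, σ⟫) / 2 := by
      rw [inner_smul_left, inner_add_left, inner_smul_left, real_inner_self_eq_norm_sq, hσ]
      simp
      ring
    refine ⟨(2⁻¹ : ℝ) • (z + ‖z‖ • σ), ?_, ?_⟩
    · rw [hs, Set.mem_ofPred_eq, hin]; positivity
    · have : ‖(2⁻¹ : ℝ) • (z + ‖z‖ • σ)‖ ^ 2 / ((‖z‖ + ⟪z, σ⟫) / 2) = ‖z‖ := by
        rw [norm_smul, mul_pow, hsq]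
        norm_num
        field_simp
        norm_num
      rw [preRel, hin, this, smul_smul]
      norm_num
  have hinj : Set.InjOn (preRel σ) s := by
    intro u hu u' hu' h
    rw [← preRel_inv σ u hσ hu, ← preRel_inv σ u' hσ hu', h]
  set ψ : E3 → E3 →L[ℝ] ℝ := fun u =>
    (2 / ⟪u, σ⟫) • innerSL ℝ u - (‖u‖ ^ 2 / ⟪u, σ⟫ ^ 2) • innerSL ℝ σ with hψ
  have hder : ∀ u ∈ s, HasFDerivWithinAt (preRel σ)
      ((2 : ℝ) • ContinuousLinearMap.id ℝ E3 - (ψ u).smulRight σ) s u := by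
    intro u hu
    have hu : 0 < ⟪u, σ⟫ := hu
    apply HasFDerivAt.hasFDerivWithinAt
    refine ((hasFDerivAt_id u).const_smul (2 : ℝ)).sub (HasFDerivAt.smul_const ?_ σ)
    have h1 : HasFDerivAt (fun u : E3 => ‖u‖ ^ 2) (2 • innerSL ℝ u) u :=
      (hasStrictFDerivAt_norm_sq u).hasFDerivAt
    have h2 : HasFDerivAt (fun u : E3 => ⟪u, σ⟫) (innerSL ℝ σ) u := by
      have := (innerSL ℝ σ).hasFDerivAt (x := u)
      refine this.congr_of_eventuallyEq (Filter.Eventually.of_forall fun x => ?_)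
      exact real_inner_comm _ _
    have h3 := h1.mul ((hasDerivAt_inv hu.ne').comp_hasFDerivAt u h2)
    refine (h3.congr_fderiv ?_).congr_of_eventuallyEq
      (Filter.Eventually.of_forall fun x => div_eq_mul_inv _ _)
    ext x
    simp [hψ]
    field_simp
    ring
  have hdet : ∀ u ∈ s, |((2 : ℝ) • ContinuousLinearMap.id ℝ E3 - (ψ u).smulRight σ).det| =
      4 * (‖u‖ ^ 2 / ⟪u, σ⟫ ^ 2) := by
    intro u hu
    have hu : 0 < ⟪u, σ⟫ := hu
    have : 8 - 4 * ψ u σ = 4 * (‖u‖ ^ 2 / ⟪u, σ⟫ ^ 2) := by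
      simp [hψ, hσ]
      field_simp
      ring
    rw [det_sub_rankOne, this, abs_of_nonneg (by positivity)]
  rw [← setLIntegral_univ, ← setLIntegral_congr himg,
    lintegral_image_eq_lintegral_abs_det_fderiv_mul volume hsm hder hinj]
  exact setLIntegral_congr_fun hsm fun u hu => by simp only [hdet u hu]

/-! ### Decoupling of the collision integral -/

theorem lintegral_scale (c : ℝ) (hc : 0 < c) (F : ℝ → ℝ≥0∞) :
    ∫⁻ q in Set.Ioi (0 : ℝ), F q = ENNReal.ofReal c * ∫⁻ x in Set.Ioi (0 : ℝ), F (c * x) := by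
  have h1 := lintegral_sq_sub 1 one_pos F
  have h2 := lintegral_sq_sub c hc (fun x => F (c * x))
  have h3 : ∀ r : ℝ, c * (r ^ 2 / c) = r ^ 2 / 1 := by intro r; field_simp
  simp_rw [h3] at h2
  rw [h1] at h2
  have h4 : ENNReal.ofReal (c / 2) = ENNReal.ofReal (1 / 2) * ENNReal.ofReal c := by
    rw [← ENNReal.ofReal_mul (by norm_num)]; congr 1; ring
  rw [h4, mul_assoc] at h2
  exact (ENNReal.mul_right_inj (by simp) ENNReal.ofReal_ne_top).1 h2

/-- The angular integral left after the change of variables. Here `‖z‖ = ‖u‖²/⟪u,σ⟫` and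
`‖v - v'‖² = ‖z‖² - ‖u‖²`. With `q = ‖z‖²/‖u‖² - 1` the density is `(1+q)^{(γ-1)/2}`, which is at most
`q^{-(1-γ)/4}`. Keeping only half of the decay in `q` is what leaves both `x^{-(1-γ)/4}` and
`‖u‖^{(γ-3)/2}` locally integrable for every `γ > -3`. -/
theorem angular_bound (γ : ℝ) (hγ2 : γ ≤ 1) (A : ℝ) (hA : 0 < A)
    (h : ℝ → ℝ≥0∞) (hh : Measurable h) (u : E3) (hu : u ≠ 0) :
    ∫⁻ σ : S2, (if 0 < ⟪u, (σ : E3)⟫ then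
        ENNReal.ofReal (4 * (‖u‖ ^ 2 / ⟪u, (σ : E3)⟫ ^ 2) * (‖u‖ ^ 2 / ⟪u, (σ : E3)⟫) ^ γ) *
          h (((‖u‖ ^ 2 / ⟪u, (σ : E3)⟫) ^ 2 - ‖u‖ ^ 2) / (2 * A)) else 0) ≤
      ENNReal.ofReal (4 * π * (2 * A) ^ ((γ + 3) / 4)) * ENNReal.ofReal (‖u‖ ^ ((γ - 3) / 2)) *
        ∫⁻ x in Set.Ioi (0 : ℝ), ENNReal.ofReal (x ^ (-((1 - γ) / 4))) * h x := by
  set s := ‖u‖ with hs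
  have hs0 : 0 < s := norm_pos_iff.2 hu
  set e : E3 := s⁻¹ • u with he
  have hen : ‖e‖ = 1 := by rw [he, norm_smul, norm_inv, norm_norm]; exact inv_mul_cancel₀ hs0.ne'
  have hue : u = s • e := by rw [he, smul_smul, mul_inv_cancel₀ hs0.ne', one_smul]
  set F : ℝ → ℝ≥0∞ := fun q => ENNReal.ofReal ((1 + q) ^ ((γ - 1) / 2)) * h (s ^ 2 * q / (2 * A))
    with hF
  have hFm : Measurable F := by
    apply Measurable.mul
    · fun_prop
    · exact hh.comp (by fun_prop)
  have h1 : ∀ σ : S2, (if 0 < ⟪u, (σ : E3)⟫ then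
        ENNReal.ofReal (4 * (s ^ 2 / ⟪u, (σ : E3)⟫ ^ 2) * (s ^ 2 / ⟪u, (σ : E3)⟫) ^ γ) *
          h (((s ^ 2 / ⟪u, (σ : E3)⟫) ^ 2 - s ^ 2) / (2 * A)) else 0) =
      ENNReal.ofReal (4 * s ^ γ) * (if 0 < ⟪e, (σ : E3)⟫ then
        ENNReal.ofReal ((⟪e, (σ : E3)⟫ ^ 3)⁻¹) * F (1 / ⟪e, (σ : E3)⟫ ^ 2 - 1) else 0) := by
    intro σ
    have hi : ⟪u, (σ : E3)⟫ = s * ⟪e, (σ : E3)⟫ := by rw [hue, inner_smul_left]; rfl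
    rw [hi]
    set t := ⟪e, (σ : E3)⟫
    by_cases ht : 0 < t
    · rw [if_pos ht, if_pos (by positivity)]
      simp only [hF]
      have e1 : 1 + (1 / t ^ 2 - 1) = t ^ (-2 : ℝ) := by
        rw [Real.rpow_neg ht.le, Real.rpow_two]; ring
      rw [e1, ← mul_assoc, ← mul_assoc, ← ENNReal.ofReal_mul (by positivity),
        ← ENNReal.ofReal_mul (by positivity), ← Real.rpow_mul ht.le]
      congr 2
      · have e2 : s ^ 2 / (s * t) = s / t := by field_simp
        have e3 : s ^ 2 / (s * t) ^ 2 = (t ^ 2)⁻¹ := by field_simp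
        have e4 : t ^ (-2 * ((γ - 1) / 2)) = t / t ^ γ := by
          rw [show -2 * ((γ - 1) / 2) = 1 - γ by ring, Real.rpow_sub ht, Real.rpow_one]
        rw [e2, e3, e4, Real.div_rpow hs0.le ht.le]
        have : t ^ γ ≠ 0 := by positivity
        field_simp
      · field_simp
    · rw [if_neg ht, if_neg (by rwa [mul_pos_iff_of_pos_left hs0]), mul_zero]
  simp_rw [h1]
  rw [lintegral_const_mul' _ _ ENNReal.ofReal_ne_top, lintegral_zonal e hen F hFm]
  set a := (1 - γ) / 4 with ha
  have h2 : ∫⁻ q in Set.Ioi (0 : ℝ), F q ≤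
      ∫⁻ q in Set.Ioi (0 : ℝ), ENNReal.ofReal (q ^ (-a)) * h (s ^ 2 * q / (2 * A)) := by
    refine setLIntegral_mono' measurableSet_Ioi fun q hq => ?_
    have hq : 0 < q := hq
    refine mul_le_mul_left ?_ _
    apply ENNReal.ofReal_le_ofReal
    calc (1 + q) ^ ((γ - 1) / 2) ≤ (1 + q) ^ (-a) := by
          apply Real.rpow_le_rpow_of_exponent_le (by linarith)
          rw [ha]; linarith
      _ ≤ q ^ (-a) := by
          apply Real.rpow_le_rpow_of_nonpos hq (by linarith)
          rw [ha]; linarith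
  set c := 2 * A / s ^ 2 with hc
  have hc0 : 0 < c := by positivity
  have h3 : ∫⁻ q in Set.Ioi (0 : ℝ), ENNReal.ofReal (q ^ (-a)) * h (s ^ 2 * q / (2 * A)) =
      ENNReal.ofReal (c ^ (1 - a)) *
        ∫⁻ x in Set.Ioi (0 : ℝ), ENNReal.ofReal (x ^ (-a)) * h x := by
    rw [lintegral_scale c hc0, ← lintegral_const_mul' _ _ ENNReal.ofReal_ne_top,
      ← lintegral_const_mul' _ _ ENNReal.ofReal_ne_top]
    refine setLIntegral_congr_fun measurableSet_Ioi fun x hx => ?_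
    have hx : 0 < x := hx
    have e1 : s ^ 2 * (c * x) / (2 * A) = x := by rw [hc]; field_simp
    simp only [e1]
    rw [← mul_assoc, ← mul_assoc, ← ENNReal.ofReal_mul (by positivity),
      ← ENNReal.ofReal_mul (by positivity), Real.mul_rpow hc0.le hx.le, ← mul_assoc,
      show 1 - a = 1 + -a by ring, Real.rpow_add hc0, Real.rpow_one]
  rw [h3] at h2
  grw [h2]
  rw [← mul_assoc, ← mul_assoc, ← ENNReal.ofReal_mul (by positivity),
      ← ENNReal.ofReal_mul (by positivity), ← ENNReal.ofReal_mul (by positivity)]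
  apply le_of_eq
  congr 2
  rw [hc, Real.div_rpow (by positivity) (by positivity), show (γ - 3) / 2 = γ - 2 * (1 - a) by
    rw [ha]; ring, Real.rpow_sub hs0, Real.rpow_mul hs0.le, Real.rpow_two,
    show (γ + 3) / 4 = 1 - a by rw [ha]; ring]
  have : (s ^ 2) ^ (1 - a) ≠ 0 := by positivity
  field_simp

/-- The collision integral of `g(v*')` against a function of `‖v - v'‖²` decouples into a
convolution of `g` with `‖·‖^{(γ-3)/2}` and a one-dimensional integral. -/
theorem core_bound (γ : ℝ) (hγ2 : γ ≤ 1) (A : ℝ) (hA : 0 < A)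
    (g : E3 → ℝ≥0∞) (hg : Measurable g) (h : ℝ → ℝ≥0∞) (hh : Measurable h) (v : E3) :
    ∫⁻ w : E3, ∫⁻ σ : S2, ENNReal.ofReal (‖v - w‖ ^ γ) *
        (g (vsP v w σ) * h (‖v - vP v w σ‖ ^ 2 / (2 * A))) ≤
      ENNReal.ofReal (4 * π * (2 * A) ^ ((γ + 3) / 4)) *
        (∫⁻ y : E3, g y * ENNReal.ofReal (‖v - y‖ ^ ((γ - 3) / 2))) *
        ∫⁻ x in Set.Ioi (0 : ℝ), ENNReal.ofReal (x ^ (-((1 - γ) / 4))) * h x := by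
  set K : E3 → S2 → ℝ≥0∞ := fun z σ => ENNReal.ofReal (‖z‖ ^ γ) *
    (g (v - (2⁻¹ : ℝ) • (z + ‖z‖ • (σ : E3))) *
      h (‖(2⁻¹ : ℝ) • (z - ‖z‖ • (σ : E3))‖ ^ 2 / (2 * A))) with hK
  have hKm : Measurable (Function.uncurry K) := by
    apply Measurable.mul
    · fun_prop
    · apply Measurable.mul
      · exact hg.comp (by fun_prop)
      · exact hh.comp (by fun_prop)
  set J : E3 → S2 → ℝ≥0∞ := fun u σ => if 0 < ⟪u, (σ : E3)⟫ then
        ENNReal.ofReal (4 * (‖u‖ ^ 2 / ⟪u, (σ : E3)⟫ ^ 2) * (‖u‖ ^ 2 / ⟪u, (σ : E3)⟫) ^ γ) *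
          h (((‖u‖ ^ 2 / ⟪u, (σ : E3)⟫) ^ 2 - ‖u‖ ^ 2) / (2 * A)) else 0 with hJ
  have hJm : Measurable (Function.uncurry J) := by
    apply Measurable.ite
    · exact measurableSet_lt measurable_const (by fun_prop)
    · apply Measurable.mul
      · fun_prop
      · exact hh.comp (by fun_prop)
    · exact measurable_const
  have s1 : ∀ w σ, ENNReal.ofReal (‖v - w‖ ^ γ) *
      (g (vsP v w σ) * h (‖v - vP v w σ‖ ^ 2 / (2 * A))) = K (v - w) σ := by
    intro w σ
    simp only [hK, vsP, vP]
    congr 3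
    · module
    · congr 3
      module
  simp_rw [s1]
  rw [lintegral_sub_left_eq_self (fun z => ∫⁻ σ : S2, K z σ) v,
    lintegral_lintegral_swap hKm.aemeasurable]
  have s2 : ∀ σ : S2, ∫⁻ z, K z σ = ∫⁻ u, g (v - u) * J u σ := by
    intro σ
    have hσ : ‖(σ : E3)‖ = 1 := by simp
    have hsm : MeasurableSet {u : E3 | 0 < ⟪u, (σ : E3)⟫} :=
      measurableSet_lt measurable_const (by fun_prop)
    rw [lintegral_preRel (σ : E3) hσ, ← lintegral_indicator hsm]
    refine lintegral_congr fun u => ?_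
    by_cases hu : 0 < ⟪u, (σ : E3)⟫
    · rw [Set.indicator_of_mem (by exact hu)]
      simp only [hK, hJ, if_pos hu]
      have hd : ‖(2⁻¹ : ℝ) • (preRel (σ : E3) u - ‖preRel (σ : E3) u‖ • (σ : E3))‖ ^ 2 =
          (‖u‖ ^ 2 / ⟪u, (σ : E3)⟫) ^ 2 - ‖u‖ ^ 2 := by
        rw [norm_preRel _ u hσ hu, preRel]
        have : (2⁻¹ : ℝ) • ((2 : ℝ) • u - (‖u‖ ^ 2 / ⟪u, (σ : E3)⟫) • (σ : E3) -
          (‖u‖ ^ 2 / ⟪u, (σ : E3)⟫) • (σ : E3)) = u - (‖u‖ ^ 2 / ⟪u, (σ : E3)⟫) • (σ : E3) := by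
          module
        rw [this, norm_sub_sq_real, norm_smul, hσ, inner_smul_right, Real.norm_eq_abs, mul_one,
          sq_abs]
        field_simp
        ring
      rw [hd, preRel_inv _ u hσ hu, norm_preRel _ u hσ hu,
        ENNReal.ofReal_mul (p := 4 * (‖u‖ ^ 2 / ⟪u, (σ : E3)⟫ ^ 2)) (by positivity)]
      ring
    · rw [Set.indicator_of_notMem (by exact hu)]
      simp only [hJ, if_neg hu, mul_zero]
  simp_rw [s2]
  rw [lintegral_lintegral_swap (by
    apply Measurable.aemeasurable
    apply Measurable.mul
    · exact hg.comp (by fun_prop)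
    · exact hJm.comp measurable_swap)]
  set I := ∫⁻ x in Set.Ioi (0 : ℝ), ENNReal.ofReal (x ^ (-((1 - γ) / 4))) * h x with hI
  set B := ENNReal.ofReal (4 * π * (2 * A) ^ ((γ + 3) / 4)) with hB
  have hgm : Measurable fun y => g y * ENNReal.ofReal (‖v - y‖ ^ ((γ - 3) / 2)) := by fun_prop
  have hgm2 : Measurable fun u => g (v - u) * ENNReal.ofReal (‖v - (v - u)‖ ^ ((γ - 3) / 2)) :=
    hgm.comp (f := fun u => v - u) (by fun_prop)
  have hJu : ∀ u, Measurable (J u) := fun u => hJm.comp (f := fun σ => (u, σ)) (by fun_prop)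
  calc ∫⁻ u, ∫⁻ σ : S2, g (v - u) * J u σ
      ≤ ∫⁻ u, (g (v - u) * ENNReal.ofReal (‖v - (v - u)‖ ^ ((γ - 3) / 2))) * (B * I) := by
        refine lintegral_mono fun u => ?_
        simp only []
        rw [lintegral_const_mul _ (hJu u), sub_sub_cancel]
        by_cases hu : u = 0
        · have : ∀ σ : S2, J u σ = 0 := by intro σ; simp [hJ, hu]
          simp [this]
        · grw [angular_bound γ hγ2 A hA h hh u hu]
          apply le_of_eq
          ring
    _ = _ := by
        rw [lintegral_mul_const _ hgm2,
          lintegral_sub_left_eq_self (fun y => g y * ENNReal.ofReal (‖v - y‖ ^ ((γ - 3) / 2))) v]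
        ring

/-! ### The one-dimensional weight and the convolution potential -/

lemma lintegral_one_add_rpow (k : ℝ) (hk : 3 < k) :
    ∫⁻ x in Set.Ioi (0 : ℝ), ENNReal.ofReal ((1 + x) ^ (-(k / 2))) ≤ ENNReal.ofReal (6 / k) := by
  have ha : -(k / 2) < -1 := by linarith
  have hInt := integrableOn_add_rpow_Ioi_of_lt (c := 0) (m := 1) ha (by norm_num)
  have hd : ∀ x ∈ Set.Ici (0 : ℝ),
      HasDerivAt (fun t : ℝ => (t + 1) ^ (-(k / 2) + 1) / (-(k / 2) + 1))
        ((x + 1) ^ (-(k / 2))) x := by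
    intro x hx
    have h1 : x + 1 ≠ 0 := by have := Set.mem_Ici.mp hx; positivity
    convert! (((hasDerivAt_id x).add_const (1 : ℝ)).rpow_const
      (p := -(k / 2) + 1) (Or.inl h1)).div_const (-(k / 2) + 1) using 1
    have : -(k / 2) + 1 ≠ 0 := by linarith
    simp [this]
  have ht : Filter.Tendsto (fun t : ℝ => (t + 1) ^ (-(k / 2) + 1) / (-(k / 2) + 1))
      Filter.atTop (nhds (0 / (-(k / 2) + 1))) := by
    rw [← neg_neg (-(k / 2) + 1)]
    exact (tendsto_rpow_neg_atTop (by linarith)).comp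
      (Filter.tendsto_atTop_add_const_right _ 1 Filter.tendsto_id) |>.div_const _
  have hI := integral_Ioi_of_hasDerivAt_of_tendsto' hd hInt ht
  simp_rw [add_comm (1 : ℝ)]
  rw [← ofReal_integral_eq_lintegral_ofReal hInt (by
    filter_upwards [ae_restrict_mem measurableSet_Ioi] with x hx
    have := Set.mem_Ioi.mp hx
    positivity), hI]
  apply ENNReal.ofReal_le_ofReal
  simp only [zero_add, one_rpow, zero_div, zero_sub]
  rw [← div_neg, div_le_div_iff₀ (by linarith) (by linarith)]
  linarith

/-- The integral in the angular variable `x` gains `k^{a-1}`: the weight `(1+x)^{-k/2}` localizes to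
`x ≲ 1/k`, so the singularity `x^{-a}` is split at `x = 1/k`. -/
lemma weight_integral (a k : ℝ) (ha0 : 0 ≤ a) (ha1 : a < 1) (hk : 3 < k) :
    ∫⁻ x in Set.Ioi (0 : ℝ), ENNReal.ofReal (x ^ (-a)) * ENNReal.ofReal ((1 + x) ^ (-(k / 2))) ≤
      ENNReal.ofReal ((1 / (1 - a) + 6) * k ^ (a - 1)) := by
  have hk0 : 0 < k := by linarith
  have hki : 0 < 1 / k := by positivity
  have hsplit : Set.Ioi (0 : ℝ) = Set.Ioc 0 (1 / k) ∪ Set.Ioi (1 / k) :=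
    (Set.Ioc_union_Ioi_eq_Ioi hki.le).symm
  have h1 : ∫⁻ x in Set.Ioc (0 : ℝ) (1 / k), ENNReal.ofReal (x ^ (-a)) *
      ENNReal.ofReal ((1 + x) ^ (-(k / 2))) ≤ ENNReal.ofReal (1 / (1 - a) * k ^ (a - 1)) := by
    have hii : IntervalIntegrable (fun x : ℝ => x ^ (-a)) volume 0 (1 / k) :=
      intervalIntegral.intervalIntegrable_rpow' (by linarith)
    have hio : IntegrableOn (fun x : ℝ => x ^ (-a)) (Set.Ioc 0 (1 / k)) :=
      (intervalIntegrable_iff_integrableOn_Ioc_of_le hki.le).mp hii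
    calc _ ≤ ∫⁻ x in Set.Ioc (0 : ℝ) (1 / k), ENNReal.ofReal (x ^ (-a)) := by
          refine setLIntegral_mono' measurableSet_Ioc fun x hx => ?_
          refine mul_le_of_le_one_right' ?_
          rw [ENNReal.ofReal_le_one]
          exact rpow_le_one_of_one_le_of_nonpos (by linarith [hx.1]) (by linarith)
      _ = ENNReal.ofReal (1 / (1 - a) * k ^ (a - 1)) := by
          rw [← ofReal_integral_eq_lintegral_ofReal hio (by
            filter_upwards [ae_restrict_mem measurableSet_Ioc] with x hx
            exact rpow_nonneg hx.1.le _), ← intervalIntegral.integral_of_le hki.le,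
            integral_rpow (Or.inl (by linarith)), zero_rpow (by linarith), one_div,
            inv_rpow hk0.le, ← rpow_neg hk0.le]
          congr 1
          rw [show -(-a + 1) = a - 1 by ring, show -a + 1 = 1 - a by ring]
          ring
  have h2 : ∫⁻ x in Set.Ioi (1 / k), ENNReal.ofReal (x ^ (-a)) *
      ENNReal.ofReal ((1 + x) ^ (-(k / 2))) ≤ ENNReal.ofReal (6 * k ^ (a - 1)) := by
    calc _ ≤ ∫⁻ x in Set.Ioi (1 / k), ENNReal.ofReal (k ^ a) *
          ENNReal.ofReal ((1 + x) ^ (-(k / 2))) := by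
          refine setLIntegral_mono' measurableSet_Ioi fun x hx => ?_
          gcongr ENNReal.ofReal ?_ * _
          have : k ^ a = (1 / k) ^ (-a) := by
            rw [one_div, inv_rpow hk0.le, ← rpow_neg hk0.le, neg_neg]
          rw [this]
          exact rpow_le_rpow_of_nonpos hki (Set.mem_Ioi.mp hx).le (by linarith)
      _ ≤ ∫⁻ x in Set.Ioi (0 : ℝ), ENNReal.ofReal (k ^ a) *
          ENNReal.ofReal ((1 + x) ^ (-(k / 2))) :=
          lintegral_mono_set (Set.Ioi_subset_Ioi hki.le)
      _ ≤ ENNReal.ofReal (k ^ a) * ENNReal.ofReal (6 / k) := by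
          rw [lintegral_const_mul _ (by fun_prop)]
          gcongr
          exact lintegral_one_add_rpow k hk
      _ = _ := by
          rw [← ENNReal.ofReal_mul (by positivity), rpow_sub_one hk0.ne']
          congr 1
          ring
  rw [hsplit]
  refine (lintegral_union_le _ _ _).trans ((add_le_add h1 h2).trans ?_)
  rw [← ENNReal.ofReal_add (by have : 0 < 1 - a := by linarith
                               positivity) (by positivity)]
  apply le_of_eq
  congr 1
  ring

lemma jap_sq (v : E3) : jap v ^ 2 = 1 + ‖v‖ ^ 2 := by
  rw [jap, Real.sq_sqrt (by positivity)]

lemma one_le_jap (v : E3) : 1 ≤ jap v := by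
  rw [jap, Real.one_le_sqrt]
  nlinarith [sq_nonneg ‖v‖]

lemma jap_pos (v : E3) : 0 < jap v := one_pos.trans_le (one_le_jap v)

lemma measurable_jap : Measurable jap := by
  unfold jap; fun_prop

/-- Gaussian integrability on velocity space. -/
lemma lintegral_gauss_lt_top (b : ℝ) (hb : 0 < b) :
    ∫⁻ y : E3, ENNReal.ofReal (Real.exp (-b * ‖y‖ ^ 2)) < ⊤ := by
  have h := (GaussianFourier.integrable_cexp_neg_mul_sq_norm_add (V := E3) (b := (b : ℂ))
    (by simpa using hb) 0 0).norm
  have h2 : Integrable fun y : E3 => Real.exp (-b * ‖y‖ ^ 2) := by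
    refine h.congr (Filter.Eventually.of_forall fun y => ?_)
    simp only [Complex.norm_exp]
    congr 1
    rw [show -(b : ℂ) * (‖y‖ : ℂ) ^ 2 + 0 * (⟪(0 : E3), y⟫ : ℝ) =
      ((-b * ‖y‖ ^ 2 : ℝ) : ℂ) by push_cast; ring, Complex.ofReal_re]
  exact h2.lintegral_lt_top

/-- Local integrability of `‖u‖^β` in dimension three. -/
lemma lintegral_ball_rpow_lt_top (β : ℝ) (hβ : -3 < β) :
    ∫⁻ u in Metric.ball (0 : E3) 1, ENNReal.ofReal (‖u‖ ^ β) < ⊤ := by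
  have h : IntegrableOn (fun u : E3 => ‖u‖ ^ β) (Metric.ball 0 1) volume := by
    refine integrableOn_ball_of_norm_le_rpow (C := 1) (α := -β) (by simp) (by simp; linarith)
      (Filter.Eventually.of_forall fun u => ?_)
      (show Measurable fun u : E3 => ‖u‖ ^ β by fun_prop).aestronglyMeasurable
    rw [Real.norm_of_nonneg (by positivity)]
    simp
  exact Integrable.lintegral_lt_top h

lemma rpow_neg_le_of_le (β X M Z : ℝ) (hβ0 : β ≤ 0) (hβ : -3 < β) (hX : 0 < X) (hM : 1 ≤ M)
    (hZ : 0 < Z) (h : X ≤ M * Z) : Z ^ β ≤ X ^ β * M ^ 3 := by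
  have h1 : (M * Z) ^ β ≤ X ^ β := rpow_le_rpow_of_nonpos hX h hβ0
  have hM0 : 0 < M := by linarith
  rw [mul_rpow hM0.le hZ.le] at h1
  have h2 : M ^ (-β) ≤ M ^ 3 := by
    rw [← rpow_natCast]
    exact rpow_le_rpow_of_exponent_le hM (by push_cast; linarith)
  have h3 : M ^ β * M ^ (-β) = 1 := by rw [← rpow_add hM0]; simp
  calc Z ^ β = (M ^ β * Z ^ β) * M ^ (-β) := by linear_combination (-(Z ^ β)) * h3
    _ ≤ X ^ β * M ^ 3 := by gcongr

lemma exp_jap_bound (s : ℝ) (hs : 0 ≤ s) :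
    Real.exp (-s / 4) * (8 * (1 + s) ^ 2) ≤ 1200 * Real.exp (-s / 8) := by
  have h1 : Real.exp (-s / 8) = Real.exp (-s / 4) * Real.exp (s / 8) := by
    rw [← Real.exp_add]; ring_nf
  rw [h1]
  have h2 := Real.quadratic_le_exp_of_nonneg (x := s / 8) (by positivity)
  have : 8 * (1 + s) ^ 2 ≤ 1200 * Real.exp (s / 8) := by nlinarith
  nlinarith [Real.exp_pos (-s / 4)]

lemma potential_pointwise (β : ℝ) (hβ : -3 < β) (hβ0 : β ≤ 0) (v y : E3) :
    Real.exp (-‖y‖ ^ 2 / 4) * ‖v - y‖ ^ β ≤ 1200 * jap v ^ β * (Real.exp (-(1 / 8) * ‖y‖ ^ 2) +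
      (Metric.ball (0 : E3) 1).indicator (fun u => ‖u‖ ^ β) (v - y)) := by
  have hE := exp_jap_bound (‖y‖ ^ 2) (by positivity)
  have hE8 : Real.exp (-‖y‖ ^ 2 / 8) ≤ 1 := by
    rw [Real.exp_le_one_iff]; nlinarith [sq_nonneg ‖y‖]
  rw [show -(1 / 8 : ℝ) * ‖y‖ ^ 2 = -‖y‖ ^ 2 / 8 by ring]
  have hj := jap_pos v
  have hy := one_le_jap y
  have hy2 := jap_sq y
  have hv2 := jap_sq v
  have hvy : ‖v‖ ≤ ‖v - y‖ + ‖y‖ := by simpa using norm_add_le (v - y) y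
  have h3 : (2 * jap y) ^ 3 ≤ 8 * (1 + ‖y‖ ^ 2) ^ 2 := by
    rw [← hy2]; nlinarith [pow_le_pow_right₀ hy (show 3 ≤ 4 by norm_num)]
  set P := jap v ^ β
  have hP : 0 < P := by positivity
  have hex := Real.exp_pos (-‖y‖ ^ 2 / 4)
  have hn := norm_nonneg (v - y)
  have hny := norm_nonneg y
  have hnv := norm_nonneg v
  by_cases hu : ‖v - y‖ < 1
  · rw [Set.indicator_of_mem (by simpa using hu)]
    have hle : jap v ≤ 2 * jap y := by
      apply le_of_sq_le_sq _ (by positivity)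
      rw [mul_pow, hy2, hv2]
      nlinarith [sq_nonneg (‖y‖ - 1)]
    have h1 : 1 ≤ P * (2 * jap y) ^ 3 := by
      simpa using rpow_neg_le_of_le β (jap v) (2 * jap y) 1 hβ0 hβ hj (by linarith) one_pos
        (by linarith)
    have hb : 0 ≤ ‖v - y‖ ^ β := by positivity
    calc Real.exp (-‖y‖ ^ 2 / 4) * ‖v - y‖ ^ β
        ≤ Real.exp (-‖y‖ ^ 2 / 4) * ((P * (8 * (1 + ‖y‖ ^ 2) ^ 2)) * ‖v - y‖ ^ β) := by
          gcongr
          refine le_mul_of_one_le_left hb (h1.trans ?_)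
          gcongr
      _ = P * ‖v - y‖ ^ β * (Real.exp (-‖y‖ ^ 2 / 4) * (8 * (1 + ‖y‖ ^ 2) ^ 2)) := by ring
      _ ≤ P * ‖v - y‖ ^ β * (1200 * Real.exp (-‖y‖ ^ 2 / 8)) := by gcongr
      _ ≤ P * ‖v - y‖ ^ β * (1200 * 1) := by gcongr
      _ ≤ 1200 * P * (Real.exp (-‖y‖ ^ 2 / 8) + ‖v - y‖ ^ β) := by
          nlinarith [mul_pos hP (Real.exp_pos (-‖y‖ ^ 2 / 8))]
  · rw [Set.indicator_of_notMem (by simpa using hu), add_zero]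
    push Not at hu
    have hle : jap v ≤ (2 * jap y) * ‖v - y‖ := by
      apply le_of_sq_le_sq _ (by positivity)
      rw [mul_pow, mul_pow, hy2, hv2]
      have : ‖v‖ ^ 2 ≤ (‖v - y‖ + ‖y‖) ^ 2 := by gcongr
      nlinarith [sq_nonneg (‖v - y‖ - ‖y‖), mul_nonneg (sq_nonneg ‖y‖)
        (show 0 ≤ ‖v - y‖ ^ 2 - 1 by nlinarith)]
    have h1 := rpow_neg_le_of_le β (jap v) (2 * jap y) ‖v - y‖ hβ0 hβ hj (by linarith)
      (by linarith) hle
    calc Real.exp (-‖y‖ ^ 2 / 4) * ‖v - y‖ ^ β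
        ≤ Real.exp (-‖y‖ ^ 2 / 4) * (P * (8 * (1 + ‖y‖ ^ 2) ^ 2)) := by
          gcongr; exact h1.trans (by gcongr)
      _ = P * (Real.exp (-‖y‖ ^ 2 / 4) * (8 * (1 + ‖y‖ ^ 2) ^ 2)) := by ring
      _ ≤ P * (1200 * Real.exp (-‖y‖ ^ 2 / 8)) := by gcongr
      _ = _ := by ring

/-- Convolving a Gaussian with the Riesz-type kernel `‖·‖^β` keeps the decay `⟨v⟩^β`. -/
lemma potential_bound (β : ℝ) (hβ : -3 < β) (hβ0 : β ≤ 0) : ∃ C : ℝ, 0 < C ∧ ∀ v : E3,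
    ∫⁻ y : E3, ENNReal.ofReal (Real.exp (-‖y‖ ^ 2 / 4)) * ENNReal.ofReal (‖v - y‖ ^ β) ≤
      ENNReal.ofReal (C * jap v ^ β) := by
  set G := ∫⁻ y : E3, ENNReal.ofReal (Real.exp (-(1 / 8) * ‖y‖ ^ 2)) with hG
  set L := ∫⁻ u in Metric.ball (0 : E3) 1, ENNReal.ofReal (‖u‖ ^ β) with hL
  have hGt : G ≠ ⊤ := (lintegral_gauss_lt_top (1 / 8) (by norm_num)).ne
  have hLt : L ≠ ⊤ := (lintegral_ball_rpow_lt_top β hβ).ne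
  refine ⟨1200 * (G.toReal + L.toReal + 1), by positivity, fun v => ?_⟩
  have hP : 0 ≤ 1200 * jap v ^ β := by have := jap_pos v; positivity
  calc ∫⁻ y : E3, ENNReal.ofReal (Real.exp (-‖y‖ ^ 2 / 4)) * ENNReal.ofReal (‖v - y‖ ^ β)
      ≤ ∫⁻ y : E3, ENNReal.ofReal (1200 * jap v ^ β) *
          (ENNReal.ofReal (Real.exp (-(1 / 8) * ‖y‖ ^ 2)) +
            (Metric.ball (0 : E3) 1).indicator (fun u => ENNReal.ofReal (‖u‖ ^ β)) (v - y)) := by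
        refine lintegral_mono fun y => ?_
        rw [← ENNReal.ofReal_mul (Real.exp_pos _).le]
        refine (ENNReal.ofReal_le_ofReal (potential_pointwise β hβ hβ0 v y)).trans ?_
        rw [ENNReal.ofReal_mul hP]
        gcongr
        refine ENNReal.ofReal_add_le.trans ?_
        gcongr
        by_cases hu : v - y ∈ Metric.ball (0 : E3) 1
        · simp only [Set.indicator_of_mem hu, le_refl]
        · simp [Set.indicator_of_notMem hu]
    _ = ENNReal.ofReal (1200 * jap v ^ β) * (G + L) := by
        have hm : Measurable ((Metric.ball (0 : E3) 1).indicator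
            (fun u => ENNReal.ofReal (‖u‖ ^ β))) :=
          Measurable.indicator (by fun_prop) measurableSet_ball
        rw [lintegral_const_mul' _ _ ENNReal.ofReal_ne_top, lintegral_add_left (by fun_prop),
          lintegral_sub_left_eq_self (fun u => (Metric.ball (0 : E3) 1).indicator
            (fun u => ENNReal.ofReal (‖u‖ ^ β)) u) v, lintegral_indicator measurableSet_ball]
    _ ≤ ENNReal.ofReal (1200 * jap v ^ β) * ENNReal.ofReal (G.toReal + L.toReal + 1) := by
        gcongr
        rw [← ENNReal.ofReal_toReal hGt, ← ENNReal.ofReal_toReal hLt,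
          ← ENNReal.ofReal_add (by positivity) (by positivity)]
        apply ENNReal.ofReal_le_ofReal
        simp
    _ = _ := by
        rw [← ENNReal.ofReal_mul hP]
        congr 1
        ring

/-! ### Pointwise bound on the weight quotient -/

lemma sub_vP (v w : E3) (σ : S2) :
    v - vP v w σ = (2⁻¹ : ℝ) • ((v - w) - ‖v - w‖ • (σ : E3)) := by
  rw [vP]; module

lemma sub_vsP (v w : E3) (σ : S2) :
    v - vsP v w σ = (2⁻¹ : ℝ) • ((v - w) + ‖v - w‖ • (σ : E3)) := by
  rw [vsP]; module

/-- By Thales, `v - v'` and `v - v*'` are orthogonal: `v` and `v*` are antipodal on the collision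
sphere. -/
lemma inner_sub_vP_sub_vsP (v w : E3) (σ : S2) : ⟪v - vP v w σ, v - vsP v w σ⟫ = 0 := by
  have hσ : ‖(σ : E3)‖ = 1 := by simp
  rw [sub_vP, sub_vsP, real_inner_smul_left, real_inner_smul_right,
    real_inner_comm, (real_inner_add_sub_eq_zero_iff _ _).mpr (by rw [norm_smul, hσ]; simp)]
  simp

/-- Since `⟪v, v - v'⟫ = ⟪v*', v - v'⟫`, a small `v*'` forces `⟨v'⟩²` to be almost as large as
`⟨v⟩² + ‖v - v'‖²/2`. -/
lemma jap_vP_lower (v w : E3) (σ : S2) :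
    jap v ^ 2 + ‖v - vP v w σ‖ ^ 2 / 2 - 2 * ‖vsP v w σ‖ ^ 2 ≤ jap (vP v w σ) ^ 2 := by
  have h0 := inner_sub_vP_sub_vsP v w σ
  set d := v - vP v w σ with hd
  have h1 : vP v w σ = v - d := by rw [hd]; abel
  rw [inner_sub_right, sub_eq_zero] at h0
  have h2 : ⟪d, vsP v w σ⟫ ≤ ‖d‖ * ‖vsP v w σ‖ := real_inner_le_norm _ _
  have h3 : ‖vP v w σ‖ ^ 2 = ‖v‖ ^ 2 - 2 * ⟪d, vsP v w σ⟫ + ‖d‖ ^ 2 := by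
    rw [h1, norm_sub_sq_real, real_inner_comm, h0]
  rw [jap_sq, jap_sq, h3]
  nlinarith [sq_nonneg (‖d‖ - 2 * ‖vsP v w σ‖)]

lemma rpow_quotient_bound (a b X M k : ℝ) (ha : 0 < a) (hb : 0 < b) (hX : 0 < X) (hM : 0 < M)
    (hk : 0 ≤ k) (h : a ^ 2 * X ≤ M * b ^ 2) :
    a ^ k * b ^ (-k) ≤ M ^ (k / 2) * X ^ (-(k / 2)) := by
  have e1 : ∀ t : ℝ, 0 < t → t ^ k = (t ^ 2) ^ (k / 2) := by
    intro t ht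
    rw [← rpow_natCast, ← rpow_mul ht.le]; congr 1; push_cast; ring
  have h1 : (a ^ 2 * X) ^ (k / 2) ≤ (M * b ^ 2) ^ (k / 2) :=
    rpow_le_rpow (by positivity) h (by positivity)
  rw [mul_rpow (by positivity) hX.le, mul_rpow hM.le (by positivity), ← e1 a ha, ← e1 b hb] at h1
  rw [rpow_neg hb.le, rpow_neg hX.le, ← div_eq_mul_inv, ← div_eq_mul_inv,
    div_le_div_iff₀ (by positivity) (by positivity)]
  exact h1

/-- The constant `(1-2/k)^{-k/2}` stays bounded uniformly in `k > 3`; this is what keeps `c`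
independent of `k`. -/
lemma near_const (k : ℝ) (hk : 3 < k) : (k / (k - 2)) ^ (k / 2) ≤ Real.exp 3 := by
  have h2 : 0 < k - 2 := by linarith
  have h1 : k / (k - 2) ≤ Real.exp (2 / (k - 2)) := by
    have := Real.add_one_le_exp (2 / (k - 2))
    have e : k / (k - 2) = 2 / (k - 2) + 1 := by field_simp; ring
    rw [e]; exact this
  calc (k / (k - 2)) ^ (k / 2) ≤ (Real.exp (2 / (k - 2))) ^ (k / 2) :=
        rpow_le_rpow (by positivity) h1 (by positivity)
    _ = Real.exp (2 / (k - 2) * (k / 2)) := by rw [← Real.exp_mul]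
    _ ≤ Real.exp 3 := by
        apply Real.exp_le_exp.mpr
        rw [div_mul_div_comm, div_le_iff₀ (by positivity)]
        linarith

/-- The Gaussian absorbs the polynomial weights when `Y = ‖v*'‖²` is large. The factor `k Y`, at
least `⟨v⟩²` there, is what produces the gain `⟨v⟩^{-2}`. -/
lemma far_const (k : ℝ) (hk : 3 < k) : ∃ C : ℝ, 0 < C ∧ ∀ Y : ℝ, 0 ≤ Y →
    k * Y * (1 + 2 * Y) ^ (k / 2) ≤ C * Real.exp (Y / 4) := by
  obtain ⟨n, hn⟩ := exists_nat_ge (k / 2 + 1)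
  refine ⟨k * (n.factorial * 8 ^ n * Real.exp (1 / 8)), by positivity, fun Y hY => ?_⟩
  have h1 : Y * (1 + 2 * Y) ^ (k / 2) ≤ (1 + 2 * Y) ^ n := by
    calc Y * (1 + 2 * Y) ^ (k / 2) ≤ (1 + 2 * Y) ^ (1 : ℝ) * (1 + 2 * Y) ^ (k / 2) := by
          rw [rpow_one]; gcongr; linarith
      _ = (1 + 2 * Y) ^ (1 + k / 2) := by rw [rpow_add (by positivity)]
      _ ≤ (1 + 2 * Y) ^ (n : ℝ) := rpow_le_rpow_of_exponent_le (by linarith) (by linarith)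
      _ = _ := rpow_natCast _ _
  have h2 := Real.pow_div_factorial_le_exp (x := (1 + 2 * Y) / 8) (by positivity) n
  rw [div_pow, div_div, div_le_iff₀ (by positivity)] at h2
  have h3 : Real.exp ((1 + 2 * Y) / 8) = Real.exp (1 / 8) * Real.exp (Y / 4) := by
    rw [← Real.exp_add]; ring_nf
  rw [h3] at h2
  calc k * Y * (1 + 2 * Y) ^ (k / 2) = k * (Y * (1 + 2 * Y) ^ (k / 2)) := by ring
    _ ≤ k * (Real.exp (1 / 8) * Real.exp (Y / 4) * (8 ^ n * n.factorial)) := by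
        exact mul_le_mul_of_nonneg_left (h1.trans h2) (by positivity)
    _ = _ := by ring

/-- Pointwise control of the weight quotient. The constant in front splits as `e³`, from
`|v*'|² ≤ ⟨v⟩²/k`, plus `C_k ⟨v⟩^{-2}`, from the Gaussian tail `|v*'|² > ⟨v⟩²/k`. -/
lemma pointwise_bound (k : ℝ) (hk : 3 < k) : ∃ C : ℝ, 0 < C ∧ ∀ (v w : E3) (σ : S2),
    jap v ^ k * jap (vP v w σ) ^ (-k) * Real.exp (-‖vsP v w σ‖ ^ 2 / 2) ≤
      (Real.exp 3 + C / jap v ^ 2) * (Real.exp (-‖vsP v w σ‖ ^ 2 / 4) *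
        (1 + ‖v - vP v w σ‖ ^ 2 / (2 * jap v ^ 2)) ^ (-(k / 2))) := by
  obtain ⟨C, hC, hfar⟩ := far_const k hk
  refine ⟨C, hC, fun v w σ => ?_⟩
  have hlow := jap_vP_lower v w σ
  set Y := ‖vsP v w σ‖ ^ 2 with hY
  have hY0 : 0 ≤ Y := by positivity
  have hA1 := one_le_jap v
  have hB1 := one_le_jap (vP v w σ)
  set a := jap v
  set b := jap (vP v w σ)
  set r := ‖v - vP v w σ‖
  have ha : 0 < a := by linarith
  have hb : 0 < b := by linarith
  set X := 1 + r ^ 2 / (2 * a ^ 2) with hX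
  have hX1 : 1 ≤ X := by rw [hX]; have : 0 ≤ r ^ 2 / (2 * a ^ 2) := by positivity
                         linarith
  have hAX : a ^ 2 * X = a ^ 2 + r ^ 2 / 2 := by rw [hX]; field_simp
  have hee : Real.exp (-Y / 2) = Real.exp (-Y / 4) * Real.exp (-Y / 4) := by
    rw [← Real.exp_add]; ring_nf
  have hXp : 0 < X ^ (-(k / 2)) := by positivity
  have hE := Real.exp_pos (-Y / 4)
  have hE1 : Real.exp (-Y / 4) ≤ 1 := by rw [Real.exp_le_one_iff]; linarith
  have hCa : 0 < C / a ^ 2 := by positivity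
  by_cases hcase : k * Y ≤ a ^ 2
  · have hk2 : 0 < k - 2 := by linarith
    have h1 := rpow_quotient_bound a b X (k / (k - 2)) k ha hb (by linarith) (by positivity)
      (by linarith) (by
        rw [div_mul_eq_mul_div, le_div_iff₀ hk2]
        nlinarith [mul_pos (pow_pos ha 2) (show 0 < X by linarith), sq_nonneg r])
    calc a ^ k * b ^ (-k) * Real.exp (-Y / 2)
        ≤ (Real.exp 3 * X ^ (-(k / 2))) * (Real.exp (-Y / 4) * 1) := by
          rw [hee]
          refine mul_le_mul (h1.trans ?_) ?_ (by positivity) (by positivity)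
          · gcongr
            exact near_const k hk
          · gcongr
      _ = Real.exp 3 * (Real.exp (-Y / 4) * X ^ (-(k / 2))) := by ring
      _ ≤ _ := by gcongr; linarith
  · push Not at hcase
    have h1 := rpow_quotient_bound a b X (1 + 2 * Y) k ha hb (by linarith) (by positivity)
      (by linarith) (by rw [hAX]; nlinarith [mul_nonneg hY0 (show 0 ≤ b ^ 2 - 1 by nlinarith)])
    have h2 : (1 + 2 * Y) ^ (k / 2) * Real.exp (-Y / 4) ≤ C / a ^ 2 := by
      rw [le_div_iff₀ (by positivity)]
      have hf := hfar Y hY0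
      have hp : 0 < (1 + 2 * Y) ^ (k / 2) := by positivity
      have he : Real.exp (Y / 4) * Real.exp (-Y / 4) = 1 := by
        rw [← Real.exp_add]; ring_nf; simp
      calc (1 + 2 * Y) ^ (k / 2) * Real.exp (-Y / 4) * a ^ 2
          ≤ (1 + 2 * Y) ^ (k / 2) * Real.exp (-Y / 4) * (k * Y) := by gcongr
        _ = (k * Y * (1 + 2 * Y) ^ (k / 2)) * Real.exp (-Y / 4) := by ring
        _ ≤ (C * Real.exp (Y / 4)) * Real.exp (-Y / 4) := by gcongr
        _ = C := by rw [mul_assoc, he, mul_one]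
    calc a ^ k * b ^ (-k) * Real.exp (-Y / 2)
        ≤ ((1 + 2 * Y) ^ (k / 2) * X ^ (-(k / 2))) * Real.exp (-Y / 2) := by gcongr
      _ = ((1 + 2 * Y) ^ (k / 2) * Real.exp (-Y / 4)) *
          (Real.exp (-Y / 4) * X ^ (-(k / 2))) := by rw [hee]; ring
      _ ≤ C / a ^ 2 * (Real.exp (-Y / 4) * X ^ (-(k / 2))) := by gcongr
      _ ≤ _ := by gcongr; linarith [Real.exp_pos 3]

/-! ### The three estimates -/

lemma lintegral_lintegral_const_mul (c : ℝ) (F : E3 → S2 → ℝ≥0∞) :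
    ∫⁻ w, ∫⁻ σ, ENNReal.ofReal c * F w σ = ENNReal.ofReal c * ∫⁻ w, ∫⁻ σ, F w σ := by
  simp_rw [lintegral_const_mul' _ _ ENNReal.ofReal_ne_top]

/-- `core_bound` with a Gaussian in `v*'` and distances measured relative to `⟨v⟩`. -/
lemma master_bound (γ : ℝ) (hγ1 : -3 < γ) (hγ2 : γ ≤ 1) : ∃ D : ℝ, 0 < D ∧
    ∀ h : ℝ → ℝ≥0∞, Measurable h → ∀ v : E3,
    ∫⁻ w, ∫⁻ σ : S2, ENNReal.ofReal (‖v - w‖ ^ γ) *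
      (ENNReal.ofReal (Real.exp (-‖vsP v w σ‖ ^ 2 / 4)) *
        h (‖v - vP v w σ‖ ^ 2 / (2 * jap v ^ 2))) ≤
      ENNReal.ofReal (D * jap v ^ γ) *
        ∫⁻ x in Set.Ioi (0 : ℝ), ENNReal.ofReal (x ^ (-((1 - γ) / 4))) * h x := by
  obtain ⟨C, hC, hpot⟩ := potential_bound ((γ - 3) / 2) (by linarith) (by linarith)
  refine ⟨4 * π * 2 ^ ((γ + 3) / 4) * C, by positivity, fun h hh v => ?_⟩
  have hj := jap_pos v
  refine (core_bound γ hγ2 (jap v ^ 2) (by positivity)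
    (fun y => ENNReal.ofReal (Real.exp (-‖y‖ ^ 2 / 4))) (by fun_prop) h hh v).trans ?_
  gcongr ?_ * _
  grw [hpot v]
  rw [← ENNReal.ofReal_mul (by positivity)]
  apply le_of_eq
  congr 1
  -- The powers combine as `⟨v⟩^{(γ+3)/2} ⟨v⟩^{(γ-3)/2} = ⟨v⟩^γ`.
  have e1 : (jap v ^ 2) ^ ((γ + 3) / 4) = jap v ^ ((γ + 3) / 2) := by
    rw [← rpow_natCast, ← rpow_mul hj.le]; congr 1; push_cast; ring
  have e2 : jap v ^ γ = jap v ^ ((γ + 3) / 2) * jap v ^ ((γ - 3) / 2) := by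
    rw [← rpow_add hj]; congr 1; ring
  rw [mul_rpow (by norm_num) (by positivity), e1, e2]
  ring

/-- All three estimates come from this bound: `s` is the set of values of
`x = |v-v'|²/(2⟨v⟩²)` kept in the integral, and `D` does not depend on `k`. -/
lemma weighted_bound (γ : ℝ) (hγ1 : -3 < γ) (hγ2 : γ ≤ 1) : ∃ D : ℝ, 0 < D ∧
    ∀ k : ℝ, 3 < k → ∃ C : ℝ, 0 < C ∧ ∀ s : Set ℝ, MeasurableSet s → ∀ v : E3,
    ∫⁻ w : E3, ∫⁻ σ : S2, (if ‖v - vP v w σ‖ ^ 2 / (2 * jap v ^ 2) ∈ s then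
      ENNReal.ofReal (‖v - w‖ ^ γ * jap v ^ k * jap (vP v w σ) ^ (-k) *
              Real.exp (-‖vsP v w σ‖ ^ 2 / 2)) else 0) ≤
      ENNReal.ofReal ((Real.exp 3 + C / jap v ^ 2) * (D * jap v ^ γ)) *
        ∫⁻ x in Set.Ioi (0 : ℝ), s.indicator (fun x => ENNReal.ofReal (x ^ (-((1 - γ) / 4))) *
          ENNReal.ofReal ((1 + x) ^ (-(k / 2)))) x := by
  obtain ⟨D, hD, hmaster⟩ := master_bound γ hγ1 hγ2
  refine ⟨D, hD, fun k hk => ?_⟩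
  obtain ⟨C, hC, hpt⟩ := pointwise_bound k hk
  refine ⟨C, hC, fun s hs v => ?_⟩
  have hj := jap_pos v
  have hK : 0 ≤ Real.exp 3 + C / jap v ^ 2 := by positivity
  have hh : Measurable (s.indicator fun x : ℝ => ENNReal.ofReal ((1 + x) ^ (-(k / 2)))) :=
    Measurable.indicator (by fun_prop) hs
  have hm := hmaster _ hh v
  calc _ ≤ ∫⁻ w : E3, ∫⁻ σ : S2, ENNReal.ofReal (Real.exp 3 + C / jap v ^ 2) *
        (ENNReal.ofReal (‖v - w‖ ^ γ) *
        (ENNReal.ofReal (Real.exp (-‖vsP v w σ‖ ^ 2 / 4)) *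
          s.indicator (fun x : ℝ => ENNReal.ofReal ((1 + x) ^ (-(k / 2))))
            (‖v - vP v w σ‖ ^ 2 / (2 * jap v ^ 2)))) := by
        refine lintegral_mono fun w => lintegral_mono fun σ => ?_
        by_cases hx : ‖v - vP v w σ‖ ^ 2 / (2 * jap v ^ 2) ∈ s
        · rw [if_pos hx, Set.indicator_of_mem hx, ← ENNReal.ofReal_mul (Real.exp_pos _).le,
            ← ENNReal.ofReal_mul (by positivity), ← ENNReal.ofReal_mul hK]
          apply ENNReal.ofReal_le_ofReal
          calc _ = ‖v - w‖ ^ γ * (jap v ^ k * jap (vP v w σ) ^ (-k) *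
                Real.exp (-‖vsP v w σ‖ ^ 2 / 2)) := by ring
            _ ≤ ‖v - w‖ ^ γ * _ := mul_le_mul_of_nonneg_left (hpt v w σ) (by positivity)
            _ = _ := by ring
        · rw [if_neg hx]; exact zero_le
    _ ≤ _ := by
        rw [lintegral_lintegral_const_mul, ENNReal.ofReal_mul hK, mul_assoc]
        gcongr
        refine hm.trans (le_of_eq ?_)
        congr 1
        refine lintegral_congr fun x => ?_
        by_cases hx : x ∈ s
        · simp [hx]
        · simp [hx]

/-- Removing all but the ends `x → 0` and `x → ∞` leaves an arbitrarily small integral, by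
continuity of a finite measure along a decreasing sequence of sets. -/
lemma small_tail (a k : ℝ) (ha0 : 0 ≤ a) (ha1 : a < 1) (hk : 3 < k) (δ : ℝ) (hδ : 0 < δ) :
    ∃ ε₀ : ℝ, 0 < ε₀ ∧ ε₀ < 1 ∧ ∀ ε : ℝ, 0 < ε → ε < ε₀ →
      ∫⁻ x in Set.Ioi (0 : ℝ), {x : ℝ | x < ε ^ 2 / 2 ∨ 1 / (2 * ε ^ 2) < x}.indicator
        (fun x => ENNReal.ofReal (x ^ (-a)) * ENNReal.ofReal ((1 + x) ^ (-(k / 2)))) x ≤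
        ENNReal.ofReal δ := by
  set f : ℝ → ℝ≥0∞ := fun x => ENNReal.ofReal (x ^ (-a)) * ENNReal.ofReal ((1 + x) ^ (-(k / 2)))
    with hf
  set S : ℝ → Set ℝ := fun ε => {x : ℝ | x < ε ^ 2 / 2 ∨ 1 / (2 * ε ^ 2) < x} with hS
  have hSm : ∀ ε, MeasurableSet (S ε) := fun ε =>
    (measurableSet_lt measurable_id measurable_const).union
      (measurableSet_lt measurable_const measurable_id)
  have hmono : ∀ ε ε' : ℝ, 0 < ε → ε ≤ ε' → S ε ⊆ S ε' := by
    intro ε ε' h0 hle x hx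
    have h2 : ε ^ 2 ≤ ε' ^ 2 := by gcongr
    have h0' : 0 < ε' := by linarith
    rcases hx with hx | hx
    · exact Or.inl (by linarith)
    · refine Or.inr (lt_of_le_of_lt ?_ hx)
      gcongr
  set μ := (volume.restrict (Set.Ioi (0 : ℝ))).withDensity f with hμ
  have hμS : ∀ ε, μ (S ε) = ∫⁻ x in Set.Ioi (0 : ℝ), (S ε).indicator f x := by
    intro ε
    rw [hμ, withDensity_apply _ (hSm ε), lintegral_indicator (hSm ε)]
  have hfin : ∀ t, μ t ≠ ⊤ := by
    intro t
    have huniv : μ Set.univ ≤ ENNReal.ofReal ((1 / (1 - a) + 6) * k ^ (a - 1)) := by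
      rw [hμ, withDensity_apply _ MeasurableSet.univ, Measure.restrict_univ]
      exact weight_integral a k ha0 ha1 hk
    exact ne_top_of_le_ne_top ENNReal.ofReal_ne_top
      ((measure_mono (Set.subset_univ t)).trans huniv)
  set e : ℕ → ℝ := fun n => 1 / ((n : ℝ) + 2) with he
  have he0 : ∀ n, 0 < e n := fun n => by simp only [he]; positivity
  have heanti : ∀ m n, m ≤ n → e n ≤ e m := by
    intro m n hmn
    simp only [he]
    gcongr
  have hcap : (⋂ n, S (e n)) ⊆ Set.Iic 0 := by
    intro x hx
    by_contra hx0
    simp only [Set.mem_Iic, not_le] at hx0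
    obtain ⟨n, hn⟩ := exists_nat_ge (max (1 / x) x)
    have hn1 : 1 / x ≤ n := (le_max_left _ _).trans hn
    have hn2 : x ≤ n := (le_max_right _ _).trans hn
    rw [div_le_iff₀ hx0] at hn1
    have hn0 : (0 : ℝ) ≤ n := n.cast_nonneg
    rcases Set.mem_iInter.mp hx n with h | h
    · simp only [he] at h
      rw [div_pow, div_div, lt_div_iff₀ (by positivity)] at h
      nlinarith [mul_nonneg hn0 hx0.le, mul_nonneg (mul_nonneg hn0 hn0) hx0.le]
    · simp only [he] at h
      rw [div_lt_iff₀ (by positivity)] at h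
      have h5 : (1 / ((n : ℝ) + 2)) ^ 2 * ((n : ℝ) + 2) ^ 2 = 1 := by field_simp
      nlinarith [mul_lt_mul_of_pos_right h (show 0 < ((n : ℝ) + 2) ^ 2 by positivity)]
  have hlim := tendsto_measure_iInter_atTop (μ := μ) (s := fun n => S (e n))
    (fun n => (hSm _).nullMeasurableSet)
    (fun m n hmn => hmono _ _ (he0 n) (heanti m n hmn)) ⟨0, hfin _⟩
  have hzero : μ (⋂ n, S (e n)) = 0 := by
    refine measure_mono_null hcap ?_
    rw [hμ, withDensity_apply _ measurableSet_Iic, Measure.restrict_restrict measurableSet_Iic]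
    rw [Set.Iic_inter_Ioi, Set.Ioc_self]
    simp
  rw [hzero] at hlim
  have hev := hlim.eventually (gt_mem_nhds (show 0 < ENNReal.ofReal δ by simpa using hδ))
  obtain ⟨n, hn⟩ := hev.exists
  refine ⟨e n, he0 n, ?_, fun ε h0 hlt => ?_⟩
  · simp only [he]
    rw [div_lt_one (by positivity)]
    have hn0 : (0 : ℝ) ≤ n := n.cast_nonneg
    linarith
  · rw [← hμS]
    exact (measure_mono (hmono _ _ h0 hlt.le)).trans hn.le

/-- Part (i), for every `k > 3`. -/
lemma part_one (γ : ℝ) (hγ1 : -3 < γ) (hγ2 : γ ≤ 1) :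
    ∃ c : ℝ, 0 < c ∧ ∀ k : ℝ, 3 < k → ∃ C : ℝ, 0 < C ∧ ∀ v : E3,
        (∫⁻ w : E3, ∫⁻ σ : S2, ENNReal.ofReal
            (‖v - w‖ ^ γ * jap v ^ k * jap (vP v w σ) ^ (-k) *
              Real.exp (-‖vsP v w σ‖ ^ 2 / 2))) ≤
          ENNReal.ofReal (c * k ^ (-(γ + 3) / 4) * jap v ^ γ + C * jap v ^ (γ - 2)) := by
  obtain ⟨D, hD, hw⟩ := weighted_bound γ hγ1 hγ2
  have ha1 : 0 < 1 - (1 - γ) / 4 := by linarith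
  set M := 1 / (1 - (1 - γ) / 4) + 6 with hM
  have hM0 : 0 < M := by positivity
  refine ⟨Real.exp 3 * D * M, by positivity, fun k hk => ?_⟩
  obtain ⟨C, hC, hb⟩ := hw k hk
  have hk0 : 0 < k := by linarith
  refine ⟨C * D * M * k ^ (-(γ + 3) / 4), by positivity, fun v => ?_⟩
  have hj := jap_pos v
  have h := hb Set.univ MeasurableSet.univ v
  simp only [Set.mem_univ, if_true, Set.indicator_univ] at h
  grw [h, weight_integral ((1 - γ) / 4) k (by linarith) (by linarith) hk]
  rw [← ENNReal.ofReal_mul (by positivity), show (1 - γ) / 4 - 1 = -(γ + 3) / 4 by ring,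
    rpow_sub hj, rpow_ofNat]
  apply le_of_eq
  congr 1
  ring

/-- The constraint on `‖v - v'‖` confines `x = ‖v - v'‖²/(2⟨v⟩²)` to the set of `small_tail`. -/
lemma part_two (γ : ℝ) (hγ1 : -3 < γ) (hγ2 : γ ≤ 1) (k : ℝ) (hk : 3 < k) (η : ℝ) (hη : 0 < η) :
    ∃ ε₀ : ℝ, 0 < ε₀ ∧ ε₀ < 1 ∧ ∀ ε : ℝ, 0 < ε → ε < ε₀ → ∀ v : E3,
          (∫⁻ w : E3, ∫⁻ σ : S2, ENNReal.ofReal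
              (if jap v / ε < ‖v - vP v w σ‖ ∨ ‖v - vP v w σ‖ < ε * jap v then
                ‖v - w‖ ^ γ * jap v ^ k * jap (vP v w σ) ^ (-k) *
                  Real.exp (-‖vsP v w σ‖ ^ 2 / 2)
              else 0)) ≤ ENNReal.ofReal (η * jap v ^ γ) := by
  obtain ⟨D, hD, hw⟩ := weighted_bound γ hγ1 hγ2
  obtain ⟨C, hC, hb⟩ := hw k hk
  obtain ⟨ε₀, h0, h1, hs⟩ := small_tail ((1 - γ) / 4) k (by linarith) (by linarith) hk
    (η / ((Real.exp 3 + C) * D)) (by positivity)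
  refine ⟨ε₀, h0, h1, fun ε hε hε' v => ?_⟩
  have hj := jap_pos v
  have hj1 := one_le_jap v
  set S : Set ℝ := {x : ℝ | x < ε ^ 2 / 2 ∨ 1 / (2 * ε ^ 2) < x} with hS
  have hSm : MeasurableSet S :=
    (measurableSet_lt measurable_id measurable_const).union
      (measurableSet_lt measurable_const measurable_id)
  refine le_trans (lintegral_mono fun w => lintegral_mono fun σ => ?_) ((hb S hSm v).trans ?_)
  · by_cases hc : jap v / ε < ‖v - vP v w σ‖ ∨ ‖v - vP v w σ‖ < ε * jap v
    · have hx : ‖v - vP v w σ‖ ^ 2 / (2 * jap v ^ 2) ∈ S := by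
        rcases hc with hc | hc
        · right
          rw [div_lt_div_iff₀ (by positivity) (by positivity)]
          rw [div_lt_iff₀ hε] at hc
          have := pow_lt_pow_left₀ hc hj.le (n := 2) (by norm_num)
          nlinarith
        · left
          rw [div_lt_div_iff₀ (by positivity) (by positivity)]
          have := pow_lt_pow_left₀ hc (norm_nonneg _) (n := 2) (by norm_num)
          nlinarith
      rw [if_pos hx, if_pos hc]
    · rw [if_neg hc]; simp
  · grw [hs ε hε hε']
    rw [← ENNReal.ofReal_mul (by positivity)]
    apply ENNReal.ofReal_le_ofReal
    have h2 : C / jap v ^ 2 ≤ C := div_le_self hC.le (one_le_pow₀ hj1)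
    have hg : 0 < jap v ^ γ := by positivity
    calc (Real.exp 3 + C / jap v ^ 2) * (D * jap v ^ γ) * (η / ((Real.exp 3 + C) * D))
        ≤ (Real.exp 3 + C) * (D * jap v ^ γ) * (η / ((Real.exp 3 + C) * D)) := by gcongr
      _ = η * jap v ^ γ := by
        have : Real.exp 3 + C ≠ 0 := by positivity
        field_simp

/-- The extra `⟨v'⟩^{-2}` turns the integral into that of part (i) for `k + 2`, times `⟨v⟩^{-2}`. -/
lemma part_three (γ : ℝ) (hγ1 : -3 < γ) (hγ2 : γ ≤ 1) (k : ℝ) (hk : 3 < k) :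
    ∃ C : ℝ, 0 < C ∧ ∀ v : E3,
        (∫⁻ w : E3, ∫⁻ σ : S2, ENNReal.ofReal
            (‖v - w‖ ^ γ * jap v ^ k * jap (vP v w σ) ^ (-k - 2) *
              Real.exp (-‖vsP v w σ‖ ^ 2 / 2))) ≤
          ENNReal.ofReal (C * jap v ^ (γ - 2)) := by
  obtain ⟨c, hc, h⟩ := part_one γ hγ1 hγ2
  obtain ⟨C, hC, hb⟩ := h (k + 2) (by linarith)
  have hk0 : 0 < k + 2 := by linarith
  refine ⟨c * (k + 2) ^ (-(γ + 3) / 4) + C, by positivity, fun v => ?_⟩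
  have hj := jap_pos v
  have hj1 := one_le_jap v
  have hi : 0 ≤ jap v ^ (-2 : ℝ) := by positivity
  calc _ = ∫⁻ w : E3, ∫⁻ σ : S2, ENNReal.ofReal (jap v ^ (-2 : ℝ)) * ENNReal.ofReal
            (‖v - w‖ ^ γ * jap v ^ (k + 2) * jap (vP v w σ) ^ (-(k + 2)) *
              Real.exp (-‖vsP v w σ‖ ^ 2 / 2)) := by
        refine lintegral_congr fun w => lintegral_congr fun σ => ?_
        rw [← ENNReal.ofReal_mul hi, show -(k + 2) = -k - 2 by ring]
        congr 1
        have : jap v ^ k = jap v ^ (-2 : ℝ) * jap v ^ (k + 2) := by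
          rw [← rpow_add hj]; congr 1; ring
        rw [this]
        ring
    _ ≤ _ := by
        rw [lintegral_lintegral_const_mul]
        grw [hb v]
        rw [← ENNReal.ofReal_mul hi]
        apply ENNReal.ofReal_le_ofReal
        have e1 : jap v ^ (γ - 2) = jap v ^ (-2 : ℝ) * jap v ^ γ := by
          rw [← rpow_add hj]; congr 1; ring
        have e2 : jap v ^ (-2 : ℝ) ≤ 1 := rpow_le_one_of_one_le_of_nonpos hj1 (by norm_num)
        have e3 : jap v ^ (-2 : ℝ) * (C * jap v ^ (γ - 2)) ≤ 1 * (C * jap v ^ (γ - 2)) := by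
          gcongr
        rw [mul_add, add_mul]
        refine add_le_add (le_of_eq ?_) (by linarith)
        rw [e1]; ring

/-- estimates for ∫∫ |v-v*|^γ ⟨v⟩^k ⟨v'⟩^{-k} e^{-|v*'|²/2} dσ dv* :
(i) the main bound with c independent of k, (ii) smallness on far/near regions in |v-v'|,
(iii) the gain of a ⟨v'⟩^{-2} factor. -/
theorem stmt15 (γ : ℝ) (hγ1 : -3 < γ) (hγ2 : γ ≤ 1) :
    (∃ c : ℝ, 0 < c ∧ ∀ k : ℝ, max 3 (3 + γ) < k → ∃ C : ℝ, 0 < C ∧ ∀ v : E3,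
        (∫⁻ w : E3, ∫⁻ σ : S2, ENNReal.ofReal
            (‖v - w‖ ^ γ * jap v ^ k * jap (vP v w σ) ^ (-k) *
              Real.exp (-‖vsP v w σ‖ ^ 2 / 2))) ≤
          ENNReal.ofReal (c * k ^ (-(γ + 3) / 4) * jap v ^ γ + C * jap v ^ (γ - 2))) ∧
    (∀ k : ℝ, max 3 (3 + γ) < k → ∀ η : ℝ, 0 < η → ∃ ε₀ : ℝ, 0 < ε₀ ∧ ε₀ < 1 ∧
        ∀ ε : ℝ, 0 < ε → ε < ε₀ → ∀ v : E3,
          (∫⁻ w : E3, ∫⁻ σ : S2, ENNReal.ofReal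
              (if jap v / ε < ‖v - vP v w σ‖ ∨ ‖v - vP v w σ‖ < ε * jap v then
                ‖v - w‖ ^ γ * jap v ^ k * jap (vP v w σ) ^ (-k) *
                  Real.exp (-‖vsP v w σ‖ ^ 2 / 2)
              else 0)) ≤ ENNReal.ofReal (η * jap v ^ γ)) ∧
    (∀ k : ℝ, max 3 (3 + γ) < k → ∃ C : ℝ, 0 < C ∧ ∀ v : E3,
        (∫⁻ w : E3, ∫⁻ σ : S2, ENNReal.ofReal
            (‖v - w‖ ^ γ * jap v ^ k * jap (vP v w σ) ^ (-k - 2) *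
              Real.exp (-‖vsP v w σ‖ ^ 2 / 2))) ≤
          ENNReal.ofReal (C * jap v ^ (γ - 2))) := by
  refine ⟨?_, ?_, ?_⟩
  · obtain ⟨c, hc, h⟩ := part_one γ hγ1 hγ2
    exact ⟨c, hc, fun k hk => h k ((le_max_left _ _).trans_lt hk)⟩
  · exact fun k hk η hη => part_two γ hγ1 hγ2 k ((le_max_left _ _).trans_lt hk) η hη
  · exact fun k hk => part_three γ hγ1 hγ2 k ((le_max_left _ _).trans_lt hk)

end
end

section
/- Let γ ∈ (−3, 0), and let l ≥ 2 and k ≥ 3 be real. Then there exists a constant C > 0 (depending on γ, l, k and the kernel) such that for every measurable f : ℝ³ → ℝ with ‖f‖_{L²}, ‖⟨·⟩^l f‖_{L²} and ‖⟨·⟩^l f‖_{L^∞} finite, ‖⟨·⟩^l Γ_k(f,f)‖_{L²} ≤ C ‖f‖_{L²} ‖⟨·⟩^l f‖_{L²}^{1+γ/3} ‖⟨·⟩^l f‖_{L^∞}^{−γ/3}. -/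
/-!
Write `F = ⟨·⟩ ^ l |f|`, `G = ⟨·⟩ ^ (-k) |f|`, `M = ‖F‖_∞`, `N = ‖F‖₂`, `A = ‖f‖₂`, and let
`u = v - v*`. By conservation of energy `⟨v⟩² ≤ ⟨v'⟩² + ⟨v*'⟩²`, so the weight `⟨v⟩ ^ (l + k)` can
be moved onto one of the two post-collision velocities (`jap_rpow_le`). Since `b` is bounded, the
weighted gain term is dominated by the two bilinear averages
`∫∫ |u| ^ γ F(v*') G(v') dσ du` and `∫∫ |u| ^ γ F(v') G(v*') dσ du` (`enorm_gain_le`), and the loss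
term by `∫∫ |u| ^ γ F(v) G(v - u) dσ du` (`enorm_loss_le`). All three are instances of `avg`, the
average of `F (v - y1) G (v - y2)` over `(u, σ)`; up to the sign of `σ`, the gain displacements
are `y = (u ∓ |u| σ) / 2`.

Such an average is estimated in `L²` by `bilinear_est`, splitting at `|u| = R`.
* For `|u| < R` the kernel is integrable with mass of order `R ^ (3 + γ)`; with `F ≤ M` and
  `‖G‖₂ ≤ A` this contributes `M R ^ (3 + γ) A` (`near_est`).
* For `|u| ≥ R` the kernel is at most `R ^ γ`. Cauchy-Schwarz with the dual angular weights
  `(1 - cos θ) ^ (± 3/4)` contributes `N R ^ γ ‖G‖₁` (`far_est`), and `‖G‖₁ ≤ C A` because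
  `⟨·⟩ ^ (-k)` is in `L²` for `k > 3/2`.

The choice `R = (N / M) ^ (1/3)` makes both contributions proportional to
`A N ^ (1 + γ/3) M ^ (-γ/3)`.

The weighted bounds behind the far part are `lintegral_wt_shift` and `lintegral_wt_neg`. The first
uses the change of variables `y = (u - |u| τ) / 2` at fixed `τ`, whose Jacobian is
`(1 - cos θ) / 8`, and `cos²(y, τ) = (1 - cos θ) / 2`; the weight `(1 - cos θ) ^ a` then leaves the
angular singularity `|cos(y, τ)| ^ (2 * a - 2)`, integrable on the sphere when `a > 1/2`. The second
exchanges the roles of `u / |u|` and `σ` in polar coordinates and needs `(1 - cos θ) ^ (-a)`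
integrable on the sphere, i.e. `a < 1`. The exponent `a = 3/4` satisfies both. Finiteness of these
sphere integrals is obtained by comparison, in an orthonormal frame, with integrals of products
of negative powers of the coordinates over a cube (`boxInt`).
-/


open MeasureTheory Real
open scoped ENNReal RealInnerProductSpace Classical

noncomputable section

/-- polynomially weighted collision operator Γ_k(f,f) = ⟨v⟩^k Q(⟨·⟩^{-k}f, ⟨·⟩^{-k}f) -/
def GammaFull (γ : ℝ) (bf : ℝ → ℝ) (k : ℝ) (f : E3 → ℝ) (v : E3) : ℝ :=
  jap v ^ k *
    (Qgain γ bf (fun u => jap u ^ (-k) * f u) (fun u => jap u ^ (-k) * f u) v -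
      Qloss γ bf (fun u => jap u ^ (-k) * f u) (fun u => jap u ^ (-k) * f u) v)

/-! ### Integration over the sphere -/

instance inst_s19 : IsFiniteMeasure (volume : Measure S2) :=
  inferInstanceAs (IsFiniteMeasure ((volume : Measure E3).toSphere))

/-- Polar coordinates in `ℝ³` for nonnegative functions. -/
lemma lintegral_polar_s19 (g : E3 → ℝ≥0∞) (hg : Measurable g) :
    ∫⁻ x, g x = ∫⁻ σ : S2, ∫⁻ r : Set.Ioi (0 : ℝ), g (r.1 • (σ : E3)) ∂Measure.volumeIoiPow 2 := by
  have h := (volume : Measure E3).measurePreserving_homeomorphUnitSphereProd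
  have hd : Module.finrank ℝ E3 - 1 = 2 := by simp
  rw [hd] at h
  have hm : Measurable fun p : S2 × Set.Ioi (0 : ℝ) => g (p.2.1 • (p.1 : E3)) := by fun_prop
  have h1 := h.lintegral_comp hm
  rw [lintegral_prod _ hm.aemeasurable] at h1
  change _ = ∫⁻ σ : S2, _ ∂((volume : Measure E3).toSphere)
  rw [← h1]
  have h2 : ∀ x : ({0}ᶜ : Set E3),
      g (((homeomorphUnitSphereProd E3) x).2.1 • (((homeomorphUnitSphereProd E3) x).1 : E3))
        = g x := by
    intro x
    rw [← homeomorphUnitSphereProd_symm_apply_coe]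
    simp
  simp_rw [h2]
  have h3 := setLIntegral_subtype (μ := (volume : Measure E3)) (s := ({0}ᶜ : Set E3))
    (measurableSet_singleton _).compl Set.univ g
  rw [Measure.restrict_univ] at h3
  rw [h3, Set.image_univ, Subtype.range_coe, restrict_compl_singleton]

/-- The surface integral of a `0`-homogeneous function as an integral over the solid unit ball. -/
lemma lintegral_sphere_eq_ball (ψ : E3 → ℝ≥0∞) (hψ : Measurable ψ)
    (hh : ∀ (r : ℝ) (x : E3), 0 < r → ψ (r • x) = ψ x) :
    ∫⁻ σ : S2, ψ σ = 3 * ∫⁻ x in Metric.ball (0 : E3) 1, ψ x := by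
  have h1 : ∫⁻ x in Metric.ball (0 : E3) 1, ψ x
      = ∫⁻ σ : S2, ψ σ * Measure.volumeIoiPow 2 (Set.Iio ⟨1, Set.mem_Ioi.2 one_pos⟩) := by
    rw [← lintegral_indicator Metric.isOpen_ball.measurableSet,
      lintegral_polar_s19 _ (hψ.indicator Metric.isOpen_ball.measurableSet)]
    refine lintegral_congr fun σ => ?_
    rw [← setLIntegral_const, ← lintegral_indicator measurableSet_Iio]
    refine lintegral_congr fun r => ?_
    have hr : (0 : ℝ) < r.1 := r.2
    have hn : ‖(r.1 • (σ : E3))‖ = r.1 := by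
      rw [norm_smul, Real.norm_of_nonneg hr.le, norm_eq_of_mem_sphere, mul_one]
    by_cases h : r.1 < 1
    · rw [Set.indicator_of_mem (by simpa [hn] using h),
        Set.indicator_of_mem (by exact h), hh _ _ hr]
    · rw [Set.indicator_of_notMem (by simpa [hn] using h),
        Set.indicator_of_notMem (by exact h)]
  rw [h1, lintegral_mul_const' _ _ (by rw [Measure.volumeIoiPow_apply_Iio]; simp),
    Measure.volumeIoiPow_apply_Iio, mul_comm, mul_assoc]
  have : ENNReal.ofReal ((1 : ℝ) ^ (2 + 1) / ((2 : ℕ) + 1)) * 3 = 1 := by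
    rw [show (3 : ℝ≥0∞) = ENNReal.ofReal 3 by simp, ← ENNReal.ofReal_mul (by positivity)]
    norm_num
  rw [this, mul_one]

/-- The function `|t| ^ (-a)` cut off to `[-1, 1]`. -/
def cutPow (a t : ℝ) : ℝ := (Set.Icc (-1 : ℝ) 1).indicator (fun t => |t| ^ (-a)) t

lemma integrable_cutPow (a : ℝ) (ha : a < 1) : Integrable (cutPow a) := by
  unfold cutPow
  refine IntegrableOn.integrable_indicator ?_ measurableSet_Icc
  have h0 : IntegrableOn (fun t : ℝ => |t| ^ (-a)) (Set.Icc 0 1) := by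
    have := (intervalIntegral.intervalIntegrable_rpow' (a := 0) (b := 1) (r := -a) (by linarith)).1
    rw [integrableOn_Icc_iff_integrableOn_Ioc]
    refine this.congr_fun (fun t ht => ?_) measurableSet_Ioc
    simp only [abs_of_pos ht.1]
  have h1 : IntegrableOn (fun t : ℝ => |t| ^ (-a)) (Set.Icc (-1) 0) := by
    have := h0.comp_neg
    simpa using this
  have := h1.union h0
  rwa [Set.Icc_union_Icc_eq_Icc (by norm_num) (by norm_num)] at this

lemma cutPow_nonneg (a t : ℝ) : 0 ≤ cutPow a t :=
  Set.indicator_nonneg (fun _ _ => by positivity) _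

/-- The integral over the box `[-1, 1]³` of a product of negative powers of the coordinates. -/
def boxInt (a : Fin 3 → ℝ) : ℝ≥0∞ := ∫⁻ x : E3, ENNReal.ofReal (∏ i, cutPow (a i) (x i))

lemma boxInt_lt_top (a : Fin 3 → ℝ) (ha : ∀ i, a i < 1) : boxInt a < ⊤ := by
  have h := Integrable.fintype_prod (𝕜 := ℝ) (f := fun i => cutPow (a i))
    (μ := fun _ : Fin 3 => (volume : Measure ℝ)) (fun i => integrable_cutPow _ (ha i))
  have h2 := ((PiLp.volume_preserving_ofLp (Fin 3)).integrable_comp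
    h.aestronglyMeasurable).2 h
  exact h2.lintegral_lt_top

lemma ae_inner_ne_zero (e : E3) (he : e ≠ 0) : ∀ᵐ x : E3, ⟪e, x⟫ ≠ 0 := by
  have h := Measure.addHaar_submodule (volume : Measure E3) (ℝ ∙ e)ᗮ (by
    intro h
    have : e ∈ (ℝ ∙ e)ᗮ := by rw [h]; trivial
    rw [Submodule.mem_orthogonal_singleton_iff_inner_right] at this
    exact he (inner_self_eq_zero.1 this))
  rw [ae_iff]
  convert h using 2
  ext x
  simp [Submodule.mem_orthogonal_singleton_iff_inner_right]

/-- A function on the unit ball dominated by negative powers of the coordinates in an orthonormal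
frame starting at `e` has integral bounded independently of `e`. -/
lemma lintegral_ball_le_boxInt (e : E3) (he : ‖e‖ = 1) (a : Fin 3 → ℝ) (ψ : E3 → ℝ≥0∞)
    (h : ∀ b : OrthonormalBasis (Fin 3) ℝ E3, b 0 = e → ∀ x : E3, ‖x‖ ≤ 1 →
      (∀ i, ⟪b i, x⟫ ≠ 0) → ψ x ≤ ENNReal.ofReal (∏ i, |⟪b i, x⟫| ^ (-a i))) :
    ∫⁻ x in Metric.ball (0 : E3) 1, ψ x ≤ boxInt a := by
  obtain ⟨b, hb⟩ := Orthonormal.exists_orthonormalBasis_extension_of_card_eq (𝕜 := ℝ) (E := E3)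
    (ι := Fin 3) (by simp) (v := fun _ => e) (s := {0}) (by
      constructor
      · intro i; simpa using he
      · intro i j hij; exact absurd (Subsingleton.elim i j) hij)
  have hb0 : b 0 = e := hb 0 rfl
  have h1 : boxInt a = ∫⁻ x : E3, ENNReal.ofReal (∏ i, cutPow (a i) (b.repr x i)) := by
    have hm := b.measurePreserving_repr
    have hF := Homeomorph.measurableEmbedding b.repr.toHomeomorph
    exact (hm.lintegral_comp_emb hF (fun x => ENNReal.ofReal (∏ i, cutPow (a i) (x i)))).symm
  rw [h1]
  refine (lintegral_mono_ae ?_).trans (setLIntegral_le_lintegral (Metric.ball (0 : E3) 1) _)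
  have hne : ∀ᵐ x : E3, ∀ i, ⟪b i, x⟫ ≠ 0 := by
    rw [ae_all_iff]
    exact fun i => ae_inner_ne_zero _ (b.orthonormal.ne_zero i)
  filter_upwards [ae_restrict_of_ae hne, ae_restrict_mem Metric.isOpen_ball.measurableSet]
    with x hx hx1
  have hx1' : ‖x‖ ≤ 1 := by simpa using (mem_ball_zero_iff.1 hx1).le
  refine (h b hb0 x hx1' hx).trans (le_of_eq ?_)
  congr 1
  refine Finset.prod_congr rfl fun i _ => ?_
  rw [b.repr_apply_apply, cutPow, Set.indicator_of_mem]
  rw [Set.mem_Icc, ← abs_le]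
  refine (abs_real_inner_le_norm _ _).trans ?_
  rw [b.norm_eq_one, one_mul]; exact hx1'

/-- Cosine of the angle between `u` and `e` (for a unit vector `e`). -/
def cosA (u e : E3) : ℝ := ⟪u, e⟫ / ‖u‖

lemma cosA_smul (r : ℝ) (x e : E3) (hr : 0 < r) : cosA (r • x) e = cosA x e := by
  unfold cosA
  rw [inner_smul_left, norm_smul, Real.norm_of_nonneg hr.le]
  simp only [conj_trivial]
  rw [mul_div_mul_left _ _ hr.ne']

lemma cosA_sphere (σ : S2) (e : E3) : cosA σ e = ⟪(σ : E3), e⟫ := by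
  simp [cosA]

lemma abs_cosA_le (u e : E3) (he : ‖e‖ = 1) : |cosA u e| ≤ 1 := by
  unfold cosA
  rw [abs_div, abs_norm]
  refine div_le_one_of_le₀ ?_ (norm_nonneg _)
  simpa [he] using abs_real_inner_le_norm u e

@[fun_prop]
lemma measurable_cosA {α : Type*} [MeasurableSpace α] {p q : α → E3} (hp : Measurable p)
    (hq : Measurable q) : Measurable fun x => cosA (p x) (q x) := by
  unfold cosA
  exact (hp.inner hq).div hp.norm

/-- A bound, uniform in the pole `e`, for `∫ |⟨σ, e⟩| ^ (-1/2) dσ`. -/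
lemma sphere_int_half (e : E3) (he : ‖e‖ = 1) :
    ∫⁻ σ : S2, ENNReal.ofReal (|cosA σ e| ^ (-(1 / 2) : ℝ)) ≤ 3 * boxInt ![1 / 2, 0, 0] := by
  rw [lintegral_sphere_eq_ball (fun x => ENNReal.ofReal (|cosA x e| ^ (-(1 / 2) : ℝ)))
    (by fun_prop) (fun r x hr => by rw [cosA_smul _ _ _ hr])]
  gcongr
  refine lintegral_ball_le_boxInt e he _ _ fun b hb x hx hne => ?_
  refine ENNReal.ofReal_le_ofReal ?_
  have h0 := hne 0
  simp only [Fin.prod_univ_three]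
  simp only [Matrix.cons_val, hb] at *
  simp only [neg_zero, rpow_zero, mul_one]
  rw [real_inner_comm] at h0 ⊢
  have hx0 : 0 < ‖x‖ := by
    rw [norm_pos_iff]; rintro rfl; simp at h0
  refine rpow_le_rpow_of_nonpos (abs_pos.2 h0) ?_ (by norm_num)
  unfold cosA
  rw [abs_div, abs_norm]
  exact le_div_self (abs_nonneg _) hx0 hx

/-- A bound, uniform in the pole `e`, for `∫ (1 - ⟨σ, e⟩) ^ (-3/4) dσ`. -/
lemma sphere_int_three_quarters (e : E3) (he : ‖e‖ = 1) :
    ∫⁻ σ : S2, ENNReal.ofReal ((1 - cosA σ e) ^ (-(3 / 4) : ℝ))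
      ≤ 3 * boxInt ![0, 3 / 4, 3 / 4] := by
  rw [lintegral_sphere_eq_ball (fun x => ENNReal.ofReal ((1 - cosA x e) ^ (-(3 / 4) : ℝ)))
    (by fun_prop) (fun r x hr => by rw [cosA_smul _ _ _ hr])]
  gcongr
  refine lintegral_ball_le_boxInt e he _ _ fun b hb x hx hne => ?_
  refine ENNReal.ofReal_le_ofReal ?_
  have h0 := hne 0
  have h1 := hne 1
  have h2 := hne 2
  simp only [Fin.prod_univ_three]
  simp only [Matrix.cons_val]
  simp only [neg_zero, rpow_zero, one_mul]
  rw [← mul_rpow (abs_nonneg _) (abs_nonneg _)]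
  have hx0 : 0 < ‖x‖ := by
    rw [norm_pos_iff]; rintro rfl; simp at h0
  have hn : ‖x‖ ^ 2 = ⟪b 0, x⟫ ^ 2 + ⟪b 1, x⟫ ^ 2 + ⟪b 2, x⟫ ^ 2 := by
    rw [← b.sum_sq_inner_right x, Fin.sum_univ_three]
  refine rpow_le_rpow_of_nonpos (by positivity) ?_ (by norm_num)
  have hc : cosA x e * ‖x‖ = ⟪b 0, x⟫ := by
    rw [hb, real_inner_comm, cosA, div_mul_cancel₀ _ hx0.ne']
  have hc1 := abs_le.1 (abs_cosA_le x e he)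
  set c := cosA x e
  rw [← hc] at hn
  have : |⟪b 1, x⟫| * |⟪b 2, x⟫| ≤ (⟪b 1, x⟫ ^ 2 + ⟪b 2, x⟫ ^ 2) / 2 := by
    nlinarith [sq_nonneg (|⟪b 1, x⟫| - |⟪b 2, x⟫|), sq_abs ⟪b 1, x⟫, sq_abs ⟪b 2, x⟫]
  refine this.trans ?_
  have e1 : ⟪b 1, x⟫ ^ 2 + ⟪b 2, x⟫ ^ 2 = ‖x‖ ^ 2 * (1 - c) * (1 + c) := by linarith
  rw [e1]
  have hx2 : ‖x‖ ^ 2 ≤ 1 := by nlinarith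
  have : ‖x‖ ^ 2 * (1 - c) ≤ 1 * (1 - c) := by gcongr; linarith
  nlinarith [mul_nonneg (sq_nonneg ‖x‖) (by linarith : 0 ≤ 1 - c)]

/-! ### The half-collision change of variables -/

/-- The half-collision shift `u ↦ (u - |u| τ) / 2`. -/
def shift (τ u : E3) : E3 := (2⁻¹ : ℝ) • (u - ‖u‖ • τ)

@[fun_prop]
lemma measurable_shift {α : Type*} [MeasurableSpace α] {p q : α → E3} (hp : Measurable p)
    (hq : Measurable q) : Measurable fun x => shift (p x) (q x) := by
  unfold shift
  fun_prop

lemma hasFDerivAt_shift (τ u : E3) (hu : u ≠ 0) :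
    HasFDerivAt (shift τ) ((2⁻¹ : ℝ) • (ContinuousLinearMap.id ℝ E3 -
      ((‖u‖⁻¹ : ℝ) • innerSL ℝ u).smulRight τ)) u := by
  have hn : HasFDerivAt (fun x : E3 => ‖x‖) ((‖u‖⁻¹ : ℝ) • innerSL ℝ u) u := by
    have h := (hasStrictFDerivAt_norm_sq u).hasFDerivAt.sqrt (by simpa using hu)
    have e : (fun x : E3 => √(‖x‖ ^ 2)) = fun x => ‖x‖ := by
      ext x; exact Real.sqrt_sq (norm_nonneg _)
    rw [e] at h
    have e2 : ((‖u‖⁻¹ : ℝ) • innerSL ℝ u : E3 →L[ℝ] ℝ)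
        = (1 / (2 * √(‖u‖ ^ 2))) • 2 • (innerSL ℝ) u := by
      rw [Real.sqrt_sq (norm_nonneg _)]
      ext x
      simp
      field_simp
    rw [e2]
    exact h
  exact ((hasFDerivAt_id u).sub (hn.smul_const τ)).const_smul (2⁻¹ : ℝ)

lemma det_shift (τ u : E3) :
    ((2⁻¹ : ℝ) • (ContinuousLinearMap.id ℝ E3 -
      ((‖u‖⁻¹ : ℝ) • innerSL ℝ u).smulRight τ)).det = (1 - cosA u τ) / 8 := by
  rw [ContinuousLinearMap.det]
  have : (((2⁻¹ : ℝ) • (ContinuousLinearMap.id ℝ E3 -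
      ((‖u‖⁻¹ : ℝ) • innerSL ℝ u).smulRight τ) : E3 →L[ℝ] E3) : E3 →ₗ[ℝ] E3)
      = (2⁻¹ : ℝ) • LinearMap.transvection
        (-((‖u‖⁻¹ : ℝ) • (innerSL ℝ u : E3 →L[ℝ] ℝ) : E3 →ₗ[ℝ] ℝ)) τ := by
    ext x : 1
    simp [LinearMap.transvection, sub_eq_add_neg]
  rw [this, LinearMap.det_smul, LinearMap.transvection.det]
  simp [cosA]
  ring

lemma inner_shift (τ u : E3) (hτ : ‖τ‖ = 1) : ⟪shift τ u, τ⟫ = (⟪u, τ⟫ - ‖u‖) / 2 := by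
  unfold shift
  rw [real_inner_smul_left, inner_sub_left, real_inner_smul_left, real_inner_self_eq_norm_sq, hτ]
  ring

lemma norm_sq_shift (τ u : E3) (hτ : ‖τ‖ = 1) :
    ‖shift τ u‖ ^ 2 = ‖u‖ * (‖u‖ - ⟪u, τ⟫) / 2 := by
  unfold shift
  rw [norm_smul, mul_pow, norm_sub_sq_real, real_inner_smul_right, norm_smul, hτ]
  norm_num
  ring

lemma injOn_shift (τ : E3) (hτ : ‖τ‖ = 1) : Set.InjOn (shift τ) {u | ⟪u, τ⟫ ≠ ‖u‖} := by
  intro u hu w hw h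
  have hn : ∀ u : E3, ‖shift τ u‖ ^ 2 = -‖u‖ * ⟪shift τ u, τ⟫ := by
    intro u
    rw [norm_sq_shift _ _ hτ, inner_shift _ _ hτ]; ring
  have h0 : ⟪shift τ u, τ⟫ ≠ 0 := by
    rw [inner_shift _ _ hτ]
    intro h
    exact hu (by linarith)
  have h1 := hn u
  have h2 := hn w
  rw [← h, h1] at h2
  have h3 : ‖u‖ = ‖w‖ := by
    have := mul_right_cancel₀ h0 h2
    linarith
  unfold shift at h
  have h4 := smul_right_injective E3 (by norm_num : (2⁻¹ : ℝ) ≠ 0) h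
  rw [h3] at h4
  simpa using h4

/-- Change of variables `y = (u - |u| τ) / 2`, whose Jacobian is `(1 - cos θ) / 8`. -/
lemma lintegral_shift_le (τ : E3) (hτ : ‖τ‖ = 1) (g : E3 → ℝ≥0∞) :
    ∫⁻ u, ENNReal.ofReal ((1 - cosA u τ) / 8) * g (shift τ u) ≤ ∫⁻ y, g y := by
  set s : Set E3 := {u | ⟪u, τ⟫ ≠ ‖u‖} with hs
  have hsm : MeasurableSet s :=
    (isOpen_ne_fun (by fun_prop) (by fun_prop)).measurableSet
  have h := lintegral_image_eq_lintegral_abs_det_fderiv_mul (volume : Measure E3) hsm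
    (f := shift τ) (fun u hu => (hasFDerivAt_shift τ u (by
      rintro rfl
      simp [hs] at hu)).hasFDerivWithinAt) (injOn_shift τ hτ) g
  calc _ = ∫⁻ u in s, ENNReal.ofReal ((1 - cosA u τ) / 8) * g (shift τ u) := by
        rw [← lintegral_indicator hsm]
        have h0 : ∀ᵐ u : E3, u ≠ 0 := by simp [ae_iff]
        refine lintegral_congr_ae ?_
        filter_upwards [h0] with u hu
        by_cases hus : u ∈ s
        · rw [Set.indicator_of_mem hus]
        · rw [Set.indicator_of_notMem hus]
          have : cosA u τ = 1 := by
            have : ⟪u, τ⟫ = ‖u‖ := by simpa [hs] using hus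
            rw [cosA, this, div_self (norm_ne_zero_iff.2 hu)]
          simp [this]
    _ = ∫⁻ y in shift τ '' s, g y := by
        rw [h]
        refine lintegral_congr fun u => ?_
        rw [det_shift, abs_of_nonneg]
        have := abs_le.1 (abs_cosA_le u τ hτ)
        linarith [this.2]
    _ ≤ _ := setLIntegral_le_lintegral _ _

/-! ### Weighted integral bounds for the collision displacements -/

/-- Angular weight `(1 - cos θ) ^ a` for the direction pair `(u, s σ)`. -/
def wt (a s : ℝ) (p : E3 × S2) : ℝ≥0∞ := ENNReal.ofReal ((1 - cosA p.1 (s • (p.2 : E3))) ^ a)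

@[fun_prop]
lemma measurable_wt (a s : ℝ) : Measurable (wt a s) := by
  unfold wt
  fun_prop

/-- Haar measure on relative velocities times surface measure on the sphere. -/
abbrev μX : Measure (E3 × S2) := (volume : Measure E3).prod (volume : Measure S2)

lemma norm_sign (s : ℝ) (hs : |s| = 1) (σ : S2) : ‖s • (σ : E3)‖ = 1 := by
  rw [norm_smul, Real.norm_eq_abs, hs, norm_eq_of_mem_sphere, one_mul]

/-- The angle between `(u - |u| τ) / 2` and `τ`, in terms of the angle between `u` and `τ`. -/
lemma cosA_shift (τ u : E3) (hτ : ‖τ‖ = 1) (hu : u ≠ 0) :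
    cosA (shift τ u) τ ^ 2 = (1 - cosA u τ) / 2 := by
  have hu' : ‖u‖ ≠ 0 := norm_ne_zero_iff.2 hu
  have e : ⟪u, τ⟫ = cosA u τ * ‖u‖ := by rw [cosA, div_mul_cancel₀ _ hu']
  rw [cosA, div_pow, norm_sq_shift _ _ hτ, inner_shift _ _ hτ, e]
  by_cases h : 1 - cosA u τ = 0
  · have : cosA u τ = 1 := by linarith
    simp [this]
  · have : ‖u‖ - cosA u τ * ‖u‖ ≠ 0 := by
      have : ‖u‖ - cosA u τ * ‖u‖ = (1 - cosA u τ) * ‖u‖ := by ring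
      rw [this]; exact mul_ne_zero h hu'
    field_simp
    ring

lemma cosA_symm_sphere (y : E3) (s : ℝ) (hs : |s| = 1) (σ : S2) :
    |cosA y (s • (σ : E3))| = |cosA σ ((‖y‖⁻¹ : ℝ) • y)| := by
  rw [cosA_sphere, cosA, real_inner_smul_right, real_inner_smul_right, abs_div, abs_mul, hs,
    one_mul, abs_mul, abs_inv, abs_norm, real_inner_comm, div_eq_inv_mul]

/-- Uniform bound on the weighted gain integral of a single function. -/
lemma lintegral_wt_shift (s : ℝ) (hs : |s| = 1) (G : E3 → ℝ≥0∞) (hG : Measurable G) (z : E3) :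
    ∫⁻ p, wt (3 / 4) s p * G (z - shift (s • (p.2 : E3)) p.1) ∂μX
      ≤ 8 * (3 * boxInt ![1 / 2, 0, 0]) * ∫⁻ y, G y := by
  rw [lintegral_prod_symm _ (by fun_prop)]
  have h0 : ∀ᵐ u : E3, u ≠ 0 := by simp [ae_iff]
  calc _ ≤ ∫⁻ σ : S2, 8 * ∫⁻ y : E3,
        ENNReal.ofReal (|cosA y (s • (σ : E3))| ^ (-(1 / 2) : ℝ)) * G (z - y) := by
        refine lintegral_mono fun σ => ?_
        have hτ := norm_sign s hs σ
        set τ := s • (σ : E3)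
        refine le_trans ?_ (mul_le_mul_right (lintegral_shift_le τ hτ
          (fun y => ENNReal.ofReal (|cosA y τ| ^ (-(1 / 2) : ℝ)) * G (z - y))) 8)
        rw [← lintegral_const_mul _ (by fun_prop)]
        refine lintegral_mono_ae ?_
        filter_upwards [h0] with u hu
        rw [← mul_assoc, ← mul_assoc]
        gcongr
        have h1 := (abs_le.1 (abs_cosA_le u τ hτ)).2
        have h2 := cosA_shift τ u hτ hu
        rw [wt, show (8 : ℝ≥0∞) = ENNReal.ofReal 8 by simp, ← ENNReal.ofReal_mul (by norm_num),
          ← ENNReal.ofReal_mul (by linarith)]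
        refine ENNReal.ofReal_le_ofReal ?_
        change (1 - cosA u τ) ^ (3 / 4 : ℝ) ≤ _
        rcases h1.eq_or_lt with h3 | h3
        · rw [h3]; simp
        have h4 : 0 < 1 - cosA u τ := by linarith
        have h5 : |cosA (shift τ u) τ| = ((1 - cosA u τ) / 2) ^ (1 / 2 : ℝ) := by
          rw [← h2, ← Real.sqrt_eq_rpow, Real.sqrt_sq_eq_abs]
        rw [h5, ← rpow_mul (by linarith)]
        have h6 : (1 - cosA u τ) ^ (3 / 4 : ℝ)
            = (1 - cosA u τ) * (1 - cosA u τ) ^ (-(1 / 4) : ℝ) := by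
          rw [← rpow_one_add' h4.le (by norm_num)]; norm_num
        rw [h6]
        have h7 : (1 - cosA u τ) ^ (-(1 / 4) : ℝ)
            ≤ ((1 - cosA u τ) / 2) ^ ((1 / 2 : ℝ) * -(1 / 2)) := by
          rw [show (1 / 2 : ℝ) * -(1 / 2) = -(1 / 4) by norm_num]
          exact rpow_le_rpow_of_nonpos (by linarith) (by linarith) (by norm_num)
        calc _ ≤ (1 - cosA u τ) * ((1 - cosA u τ) / 2) ^ ((1 / 2 : ℝ) * -(1 / 2)) := by gcongr
          _ = _ := by ring
    _ = 8 * ∫⁻ y : E3, (∫⁻ σ : S2,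
          ENNReal.ofReal (|cosA y (s • (σ : E3))| ^ (-(1 / 2) : ℝ))) * G (z - y) := by
        rw [lintegral_const_mul _ (Measurable.lintegral_prod_right' (f := fun p : S2 × E3 =>
          ENNReal.ofReal (|cosA p.2 (s • (p.1 : E3))| ^ (-(1 / 2) : ℝ)) * G (z - p.2))
          (by fun_prop)), lintegral_lintegral_swap (by fun_prop)]
        congr 1
        refine lintegral_congr fun y => ?_
        dsimp only
        rw [lintegral_mul_const _ (by fun_prop)]
    _ ≤ 8 * ∫⁻ y : E3, (3 * boxInt ![1 / 2, 0, 0]) * G (z - y) := by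
        gcongr 8 * ?_
        refine lintegral_mono_ae ?_
        filter_upwards [h0] with y hy
        gcongr
        simp_rw [cosA_symm_sphere y s hs]
        refine sphere_int_half _ ?_
        rw [norm_smul, norm_inv, norm_norm, inv_mul_cancel₀ (norm_ne_zero_iff.2 hy)]
    _ = _ := by
        rw [lintegral_const_mul _ (by fun_prop), lintegral_sub_left_eq_self G z, ← mul_assoc]

/-- Uniform bound on the integral over relative velocities with the dual, singular weight. -/
lemma lintegral_wt_neg (s : ℝ) (hs : |s| = 1) (H : E3 → ℝ≥0∞) (hH : Measurable H) (z : E3) :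
    ∫⁻ p, wt (-(3 / 4)) s p * H (z + ‖p.1‖ • s • (p.2 : E3)) ∂μX
      ≤ (3 * boxInt ![0, 3 / 4, 3 / 4]) * ∫⁻ y, H y := by
  rw [lintegral_prod _ (by fun_prop),
    lintegral_polar_s19 _ (Measurable.lintegral_prod_right' (f := fun p : E3 × S2 =>
      wt (-(3 / 4)) s p * H (z + ‖p.1‖ • s • (p.2 : E3))) (by fun_prop))]
  have e : ∀ (ω σ : S2) (r : Set.Ioi (0 : ℝ)),
      wt (-(3 / 4)) s (r.1 • (ω : E3), σ) * H (z + ‖r.1 • (ω : E3)‖ • s • (σ : E3))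
      = ENNReal.ofReal ((1 - cosA ω (s • (σ : E3))) ^ (-(3 / 4) : ℝ)) *
        H (z + r.1 • s • (σ : E3)) := by
    intro ω σ r
    have hr : (0 : ℝ) < r.1 := r.2
    rw [wt, cosA_smul _ _ _ hr, norm_smul, Real.norm_of_nonneg hr.le, norm_eq_of_mem_sphere,
      mul_one]
  simp_rw [e]
  rw [lintegral_lintegral_swap (Measurable.aemeasurable (Measurable.lintegral_prod_right'
    (f := fun p : (S2 × Set.Ioi (0 : ℝ)) × S2 =>
      ENNReal.ofReal ((1 - cosA p.1.1 (s • (p.2 : E3))) ^ (-(3 / 4) : ℝ)) *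
        H (z + p.1.2.1 • s • (p.2 : E3))) (by fun_prop)))]
  calc _ = ∫⁻ r : Set.Ioi (0 : ℝ), (∫⁻ σ : S2, (∫⁻ ω : S2,
        ENNReal.ofReal ((1 - cosA ω (s • (σ : E3))) ^ (-(3 / 4) : ℝ))) *
          H (z + r.1 • s • (σ : E3))) ∂Measure.volumeIoiPow 2 := by
        refine lintegral_congr fun r => ?_
        rw [lintegral_lintegral_swap (by fun_prop)]
        refine lintegral_congr fun σ => ?_
        rw [lintegral_mul_const _ (by fun_prop)]
    _ ≤ ∫⁻ r : Set.Ioi (0 : ℝ), (∫⁻ σ : S2, (3 * boxInt ![0, 3 / 4, 3 / 4]) *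
          H (z + r.1 • s • (σ : E3))) ∂Measure.volumeIoiPow 2 := by
        refine lintegral_mono fun r => lintegral_mono fun σ => ?_
        gcongr
        exact sphere_int_three_quarters _ (norm_sign s hs σ)
    _ = ∫⁻ y : E3, (3 * boxInt ![0, 3 / 4, 3 / 4]) * H (z + s • y) := by
        rw [lintegral_polar_s19 _ (by fun_prop), lintegral_lintegral_swap (by fun_prop)]
        simp_rw [smul_comm s]
    _ = _ := by
        rw [lintegral_const_mul _ (by fun_prop)]
        congr 1
        rcases (abs_eq zero_le_one).1 hs with rfl | rfl
        · simp_rw [one_smul]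
          exact lintegral_add_left_eq_self _ _
        · simp_rw [neg_one_smul, ← sub_eq_add_neg]
          exact lintegral_sub_left_eq_self _ _

/-- The dual weights are mutually inverse off the null set `{cos θ = 1}`. -/
lemma ae_wt (s : ℝ) (hs : |s| = 1) : ∀ᵐ p ∂μX, 1 ≤ wt (3 / 4) s p * wt (-(3 / 4)) s p := by
  have hms : MeasurableSet {p : E3 × S2 | ¬ 1 ≤ wt (3 / 4) s p * wt (-(3 / 4)) s p} :=
    (measurableSet_le measurable_const
      ((measurable_wt _ _).mul (measurable_wt _ _))).compl
  rw [ae_iff, Measure.prod_apply_symm hms, lintegral_eq_zero_iff (measurable_measure_prodMk_right hms)]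
  refine Filter.Eventually.of_forall fun σ => ?_
  have hτ := norm_sign s hs σ
  have hs3 := Measure.addHaar_submodule (volume : Measure E3) (ℝ ∙ (s • (σ : E3))) (by
    intro h
    have h1 := finrank_span_singleton (K := ℝ) (v := s • (σ : E3)) (by
      rw [← norm_ne_zero_iff, hτ]; exact one_ne_zero)
    rw [h, finrank_top] at h1
    simp at h1)
  refine measure_mono_null (fun u hu => ?_) hs3
  by_contra hu2
  refine hu ?_
  have h1 := (abs_le.1 (abs_cosA_le u _ hτ)).2
  have h2 : cosA u (s • (σ : E3)) ≠ 1 := by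
    intro h
    by_cases hu0 : ‖u‖ = 0
    · rw [norm_eq_zero] at hu0
      exact hu2 (by rw [hu0]; exact Submodule.zero_mem _)
    · rw [cosA, div_eq_one_iff_eq hu0] at h
      have h3 := (inner_eq_norm_mul_iff_real (x := u) (y := s • (σ : E3))).1 (by
        rw [h, hτ, mul_one])
      rw [hτ, one_smul] at h3
      exact hu2 (by
        rw [SetLike.mem_coe, h3]
        exact Submodule.smul_mem _ _ (Submodule.mem_span_singleton_self _))
  have h4 : 0 < 1 - cosA u (s • (σ : E3)) := sub_pos.2 (lt_of_le_of_ne h1 h2)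
  change 1 ≤ wt _ _ _ * wt _ _ _
  rw [wt, wt, ← ENNReal.ofReal_mul (by positivity), ← rpow_add h4]
  simp

/-! ### Bilinear averages in `L²` -/

/-- Cauchy-Schwarz in the form `h² ≤ a b ⟹ (∫ h)² ≤ (∫ a) (∫ b)`. -/
lemma sq_lintegral_le {X : Type*} [MeasurableSpace X] {μ : Measure X} {h a b : X → ℝ≥0∞}
    (ha : Measurable a) (hb : Measurable b) (hab : ∀ᵐ x ∂μ, h x ^ 2 ≤ a x * b x) :
    (∫⁻ x, h x ∂μ) ^ 2 ≤ (∫⁻ x, a x ∂μ) * ∫⁻ x, b x ∂μ := by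
  have h1 : ∫⁻ x, h x ∂μ ≤ ∫⁻ x, ((fun x => a x ^ (1 / 2 : ℝ)) * fun x => b x ^ (1 / 2 : ℝ)) x ∂μ := by
    refine lintegral_mono_ae ?_
    filter_upwards [hab] with x hx
    rw [Pi.mul_apply, ← ENNReal.mul_rpow_of_nonneg _ _ (by norm_num)]
    refine le_trans ?_ (ENNReal.rpow_le_rpow hx (by norm_num))
    rw [← ENNReal.rpow_natCast_mul]
    norm_num
  have h2 := h1.trans (ENNReal.lintegral_mul_le_Lp_mul_Lq μ Real.HolderConjugate.two_two
    (ha.pow_const (1 / 2 : ℝ)).aemeasurable (hb.pow_const (1 / 2 : ℝ)).aemeasurable)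
  have e : ∀ t : ℝ≥0∞, (t ^ (1 / 2 : ℝ)) ^ (2 : ℝ) = t := fun t => by
    rw [← ENNReal.rpow_mul]; norm_num
  simp_rw [e] at h2
  calc _ ≤ ((∫⁻ x, a x ∂μ) ^ (1 / 2 : ℝ) * (∫⁻ x, b x ∂μ) ^ (1 / 2 : ℝ)) ^ 2 := by gcongr
    _ = _ := by
      rw [mul_pow, ← ENNReal.rpow_two, ← ENNReal.rpow_two, e, e]

section Abstract

variable {X : Type*} [MeasurableSpace X] {μ : Measure X} [SFinite μ]

/-- `L²` bound of a bilinear averaging operator when one factor is bounded and the kernel is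
integrable. -/
lemma near_est {k : X → ℝ≥0∞} (hk : Measurable k) {y1 y2 : X → E3} (hy1 : Measurable y1)
    (hy2 : Measurable y2) {F G : E3 → ℝ≥0∞} (hF : Measurable F) (hG : Measurable G)
    {M : ℝ≥0∞} (hM : ∀ᵐ v, F v ≤ M) :
    ∫⁻ v, (∫⁻ x, k x * (F (v - y1 x) * G (v - y2 x)) ∂μ) ^ 2
      ≤ (M * ∫⁻ x, k x ∂μ) ^ 2 * ∫⁻ v, G v ^ 2 := by
  calc _ ≤ ∫⁻ v, (∫⁻ x, k x ∂μ) * ∫⁻ x, k x * (F (v - y1 x) * G (v - y2 x)) ^ 2 ∂μ := by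
        refine lintegral_mono fun v => ?_
        refine sq_lintegral_le hk (by fun_prop) (Filter.Eventually.of_forall fun x => ?_)
        apply le_of_eq; ring
    _ = (∫⁻ x, k x ∂μ) * ∫⁻ x, k x * (∫⁻ v, (F (v - y1 x) * G (v - y2 x)) ^ 2) ∂μ := by
        rw [lintegral_const_mul _ (Measurable.lintegral_prod_right' (f := fun p : E3 × X =>
          k p.2 * (F (p.1 - y1 p.2) * G (p.1 - y2 p.2)) ^ 2) (by fun_prop)),
          lintegral_lintegral_swap (by fun_prop)]
        congr 1
        refine lintegral_congr fun x => ?_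
        dsimp only
        rw [lintegral_const_mul _ (by fun_prop)]
    _ ≤ (∫⁻ x, k x ∂μ) * ∫⁻ x, k x * (M ^ 2 * ∫⁻ v, G v ^ 2) ∂μ := by
        gcongr with x
        rw [← lintegral_sub_right_eq_self (fun v => G v ^ 2) (y2 x),
          ← lintegral_const_mul _ (by fun_prop)]
        have hM' : ∀ᵐ v, F (v - y1 x) ≤ M :=
          (measurePreserving_sub_right volume (y1 x)).quasiMeasurePreserving.ae hM
        refine lintegral_mono_ae ?_
        filter_upwards [hM'] with v hv
        rw [mul_pow]
        gcongr
    _ = _ := by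
        rw [lintegral_mul_const _ hk]; ring

/-- `L²` bound of a bilinear averaging operator by Cauchy-Schwarz with dual weights `W1`, `W2`. -/
lemma far_est {k : ℝ≥0∞} {W1 W2 : X → ℝ≥0∞} (hW1 : Measurable W1)
    (hW2 : Measurable W2) (hW : ∀ᵐ x ∂μ, 1 ≤ W1 x * W2 x)
    {y1 y2 : X → E3} (hy1 : Measurable y1)
    (hy2 : Measurable y2) {F G : E3 → ℝ≥0∞} (hF : Measurable F) (hG : Measurable G)
    {A : ℝ≥0∞} (h1 : ∀ z, ∫⁻ x, W1 x * G (z - y2 x) ∂μ ≤ A)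
    (h2 : ∀ z, ∫⁻ x, W2 x * G (z - (y2 x - y1 x)) ∂μ ≤ A) :
    ∫⁻ v, (∫⁻ x, k * (F (v - y1 x) * G (v - y2 x)) ∂μ) ^ 2
      ≤ (k * A) ^ 2 * ∫⁻ v, F v ^ 2 := by
  calc _ ≤ ∫⁻ v, k ^ 2 * (A * ∫⁻ x, W2 x * (F (v - y1 x) ^ 2 * G (v - y2 x)) ∂μ) := by
        refine lintegral_mono fun v => ?_
        dsimp only
        rw [lintegral_const_mul _ (by fun_prop), mul_pow]
        gcongr
        refine (sq_lintegral_le (a := fun x => W1 x * G (v - y2 x))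
          (b := fun x => W2 x * (F (v - y1 x) ^ 2 * G (v - y2 x))) (by fun_prop) (by fun_prop) ?_).trans ?_
        · filter_upwards [hW] with x hx
          calc _ = 1 * (F (v - y1 x) * G (v - y2 x)) ^ 2 := (one_mul _).symm
            _ ≤ (W1 x * W2 x) * (F (v - y1 x) * G (v - y2 x)) ^ 2 := by gcongr
            _ = _ := by ring
        · gcongr
          exact h1 v
    _ = k ^ 2 * (A * ∫⁻ x, (∫⁻ v, W2 x * (F v ^ 2 * G (v - (y2 x - y1 x)))) ∂μ) := by
        have hm : Measurable fun v => ∫⁻ x, W2 x * (F (v - y1 x) ^ 2 * G (v - y2 x)) ∂μ :=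
          Measurable.lintegral_prod_right' (f := fun p : E3 × X =>
            W2 p.2 * (F (p.1 - y1 p.2) ^ 2 * G (p.1 - y2 p.2))) (by fun_prop)
        rw [lintegral_const_mul _ (by fun_prop), lintegral_const_mul _ hm,
          lintegral_lintegral_swap (by fun_prop)]
        congr 2
        refine lintegral_congr fun x => ?_
        rw [← lintegral_sub_right_eq_self
          (fun v => W2 x * (F v ^ 2 * G (v - (y2 x - y1 x)))) (y1 x)]
        refine lintegral_congr fun v => ?_
        rw [sub_sub, add_sub_cancel]
    _ = k ^ 2 * (A * ∫⁻ v, F v ^ 2 * ∫⁻ x, W2 x * G (v - (y2 x - y1 x)) ∂μ) := by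
        rw [lintegral_lintegral_swap (by fun_prop)]
        congr 2
        refine lintegral_congr fun v => ?_
        rw [← lintegral_const_mul _ (by fun_prop)]
        refine lintegral_congr fun x => ?_
        ring
    _ ≤ k ^ 2 * (A * ∫⁻ v, F v ^ 2 * A) := by
        gcongr with v
        exact h2 v
    _ = _ := by
        rw [lintegral_mul_const _ (by fun_prop)]; ring

end Abstract

/-! ### The soft potential and the balancing radius -/

/-- Total surface area of the unit sphere. -/
def areaS : ℝ≥0∞ := (volume : Measure S2) Set.univ

lemma areaS_lt_top : areaS < ⊤ := measure_lt_top _ _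

/-- The soft potential restricted to relative speeds below `R`. -/
def nearK (γ R : ℝ) (u : E3) : ℝ≥0∞ := if ‖u‖ < R then ENNReal.ofReal (‖u‖ ^ γ) else 0

@[fun_prop]
lemma measurable_nearK (γ R : ℝ) : Measurable (nearK γ R) := by
  unfold nearK
  refine Measurable.ite (measurableSet_lt (by fun_prop) (by fun_prop)) (by fun_prop) (by fun_prop)

lemma lintegral_nearK (γ R : ℝ) (hγ : -3 < γ) (hR : 0 < R) :
    ∫⁻ u, nearK γ R u = areaS * ENNReal.ofReal (R ^ (3 + γ) / (3 + γ)) := by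
  rw [lintegral_polar_s19 _ (by fun_prop)]
  have h1 : ∀ σ : S2, ∫⁻ r : Set.Ioi (0 : ℝ), nearK γ R (r.1 • (σ : E3)) ∂Measure.volumeIoiPow 2
      = ENNReal.ofReal (R ^ (3 + γ) / (3 + γ)) := by
    intro σ
    have e : ∀ r : Set.Ioi (0 : ℝ), nearK γ R (r.1 • (σ : E3))
        = if r.1 < R then ENNReal.ofReal (r.1 ^ γ) else 0 := by
      intro r
      have hr : (0 : ℝ) < r.1 := r.2
      rw [nearK, norm_smul, Real.norm_of_nonneg hr.le, norm_eq_of_mem_sphere, mul_one]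
    simp_rw [e]
    have hm : Measurable fun r : ℝ => if r < R then ENNReal.ofReal (r ^ γ) else 0 :=
      Measurable.ite (measurableSet_lt (by fun_prop) (by fun_prop)) (by fun_prop) (by fun_prop)
    have h2 := lintegral_withDensity_eq_lintegral_mul (Measure.comap Subtype.val volume)
      (f := fun r : Set.Ioi (0 : ℝ) => ENNReal.ofReal (r.1 ^ 2)) (by fun_prop)
      (g := fun r : Set.Ioi (0 : ℝ) => if r.1 < R then ENNReal.ofReal (r.1 ^ γ) else 0)
      (hm.comp measurable_subtype_coe)
    have h3 := setLIntegral_subtype (μ := (volume : Measure ℝ)) (s := Set.Ioi (0 : ℝ))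
      measurableSet_Ioi Set.univ (fun r => ENNReal.ofReal (r ^ 2) *
        if r < R then ENNReal.ofReal (r ^ γ) else 0)
    rw [Measure.restrict_univ, Set.image_univ, Subtype.range_coe] at h3
    refine h2.trans (Eq.trans ?_ (h3.trans ?_))
    · rfl
    have h4 : ∫⁻ r in Set.Ioi (0 : ℝ), (ENNReal.ofReal (r ^ 2) *
        if r < R then ENNReal.ofReal (r ^ γ) else 0)
        = ∫⁻ r in Set.Ioc (0 : ℝ) R, ENNReal.ofReal (r ^ (2 + γ)) := by
      rw [← setLIntegral_congr (Ioo_ae_eq_Ioc (μ := volume) (a := (0 : ℝ)) (b := R)),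
        ← lintegral_indicator measurableSet_Ioi, ← lintegral_indicator measurableSet_Ioo]
      refine lintegral_congr fun r => ?_
      by_cases h0 : 0 < r
      · rw [Set.indicator_of_mem (by exact h0)]
        by_cases hr : r < R
        · rw [Set.indicator_of_mem (by exact ⟨h0, hr⟩), if_pos hr,
            ← ENNReal.ofReal_mul (by positivity), rpow_add h0, rpow_two]
        · rw [Set.indicator_of_notMem (by exact fun h => hr h.2), if_neg hr, mul_zero]
      · rw [Set.indicator_of_notMem (by exact h0), Set.indicator_of_notMem (by exact fun h => h0 h.1)]
    rw [h4, ← ofReal_integral_eq_lintegral_ofReal, ← intervalIntegral.integral_of_le hR.le,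
      integral_rpow (Or.inl (by linarith)), zero_rpow (by linarith)]
    · ring_nf
    · exact (intervalIntegral.intervalIntegrable_rpow' (by linarith)).1
    · filter_upwards [ae_restrict_mem measurableSet_Ioc] with r hr
      exact rpow_nonneg hr.1.le _
  simp_rw [h1]
  rw [lintegral_const, mul_comm, areaS]

lemma lintegral_nearK_prod (γ R : ℝ) (hγ : -3 < γ) (hR : 0 < R) :
    ∫⁻ p, nearK γ R p.1 ∂μX = areaS * (areaS * ENNReal.ofReal (R ^ (3 + γ) / (3 + γ))) := by
  rw [lintegral_prod _ (by fun_prop)]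
  simp only [lintegral_const]
  rw [lintegral_mul_const _ (by fun_prop), lintegral_nearK γ R hγ hR, mul_comm, areaS]

lemma kernel_le (γ R : ℝ) (hγ : γ < 0) (hR : 0 < R) (u : E3) :
    ENNReal.ofReal (‖u‖ ^ γ) ≤ nearK γ R u + ENNReal.ofReal (R ^ γ) := by
  unfold nearK
  split_ifs with h
  · exact le_self_add
  · rw [zero_add]
    exact ENNReal.ofReal_le_ofReal (rpow_le_rpow_of_nonpos hR (not_lt.1 h) hγ.le)

lemma add_sq_le_two (a b : ℝ≥0∞) : (a + b) ^ 2 ≤ 2 * (a ^ 2 + b ^ 2) := by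
  have := ENNReal.rpow_add_le_mul_rpow_add_rpow a b (p := 2) (by norm_num)
  norm_num at this
  exact_mod_cast this

/-- Constant in `bilinear_est`; its two summands come from small and large relative speeds. -/
def cBil (γ : ℝ) (c D : ℝ≥0∞) : ℝ≥0∞ :=
  2 * (areaS * (areaS * ENNReal.ofReal (1 / (3 + γ))) + c * D)

/-- The interpolated product `N ^ (1 + γ/3) M ^ (-γ/3)` is attained by balancing the two
contributions at the radius `R = (N / M) ^ (1/3)`. -/
lemma exists_radius (γ : ℝ) {M N : ℝ≥0∞} (hM0 : M ≠ 0) (hM : M ≠ ⊤) (hN0 : N ≠ 0) (hN : N ≠ ⊤) :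
    ∃ R : ℝ, 0 < R ∧ M * ENNReal.ofReal (R ^ (3 + γ)) = N ^ (1 + γ / 3) * M ^ (-γ / 3) ∧
      N * ENNReal.ofReal (R ^ γ) = N ^ (1 + γ / 3) * M ^ (-γ / 3) := by
  have hm : 0 < M.toReal := ENNReal.toReal_pos hM0 hM
  have hn : 0 < N.toReal := ENNReal.toReal_pos hN0 hN
  obtain ⟨m, rfl⟩ : ∃ m : ℝ, M = ENNReal.ofReal m := ⟨_, (ENNReal.ofReal_toReal hM).symm⟩
  obtain ⟨n, rfl⟩ : ∃ n : ℝ, N = ENNReal.ofReal n := ⟨_, (ENNReal.ofReal_toReal hN).symm⟩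
  have hm' : 0 < m := by by_contra h; simp [ENNReal.ofReal_of_nonpos (not_lt.1 h)] at hM0
  have hn' : 0 < n := by by_contra h; simp [ENNReal.ofReal_of_nonpos (not_lt.1 h)] at hN0
  refine ⟨(n / m) ^ (1 / 3 : ℝ), by positivity, ?_, ?_⟩
  · rw [ENNReal.ofReal_rpow_of_pos hm', ENNReal.ofReal_rpow_of_pos hn',
      ← ENNReal.ofReal_mul hm'.le, ← ENNReal.ofReal_mul (by positivity)]
    congr 1
    rw [← rpow_mul (by positivity), div_rpow hn'.le hm'.le, div_eq_mul_inv, ← rpow_neg hm'.le]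
    rw [show (1 / 3 : ℝ) * (3 + γ) = 1 + γ / 3 by ring, mul_left_comm]
    congr 1
    nth_rewrite 1 [← rpow_one m]
    rw [← rpow_add hm']
    congr 1
    ring
  · rw [ENNReal.ofReal_rpow_of_pos hm', ENNReal.ofReal_rpow_of_pos hn',
      ← ENNReal.ofReal_mul hn'.le, ← ENNReal.ofReal_mul (by positivity)]
    congr 1
    rw [← rpow_mul (by positivity), div_rpow hn'.le hm'.le, div_eq_mul_inv, ← rpow_neg hm'.le,
      ← mul_assoc, rpow_add hn', rpow_one]
    congr 2 <;> ring_nf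

/-- `L²` bound for the bilinear average with the singular kernel `|u| ^ γ`: `near_est` on
`|u| < R` and `far_est` on the rest, at the balancing radius. The weights `W1`, `W2` only have to
satisfy the two uniform `L¹` bounds `h1`, `h2`. -/
lemma bilinear_est (γ : ℝ) (hγ1 : -3 < γ) (hγ2 : γ < 0)
    {W1 W2 : E3 × S2 → ℝ≥0∞} (hW1 : Measurable W1)
    (hW2 : Measurable W2) (hW : ∀ᵐ x ∂μX, 1 ≤ W1 x * W2 x)
    {y1 y2 : E3 × S2 → E3} (hy1 : Measurable y1) (hy2 : Measurable y2) {c : ℝ≥0∞}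
    (h1 : ∀ H : E3 → ℝ≥0∞, Measurable H → ∀ z,
      ∫⁻ x, W1 x * H (z - y2 x) ∂μX ≤ c * ∫⁻ v, H v)
    (h2 : ∀ H : E3 → ℝ≥0∞, Measurable H → ∀ z,
      ∫⁻ x, W2 x * H (z - (y2 x - y1 x)) ∂μX ≤ c * ∫⁻ v, H v)
    {F G : E3 → ℝ≥0∞} (hF : Measurable F) (hG : Measurable G) {A M N D : ℝ≥0∞}
    (hFM : ∀ᵐ v, F v ≤ M) (hM : M ≠ ⊤) (hN : N ≠ ⊤) (hFN : ∫⁻ v, F v ^ 2 = N ^ 2)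
    (hG2 : ∫⁻ v, G v ^ 2 ≤ A ^ 2) (hG1 : ∫⁻ v, G v ≤ D * A) :
    ∫⁻ v, (∫⁻ p, ENNReal.ofReal (‖p.1‖ ^ γ) * (F (v - y1 p) * G (v - y2 p)) ∂μX) ^ 2
      ≤ (cBil γ c D * (A * (N ^ (1 + γ / 3) * M ^ (-γ / 3)))) ^ 2 := by
  -- When `F` vanishes a.e. the balancing radius does not exist, but the left-hand side is zero.
  by_cases hF0 : F =ᵐ[volume] 0
  · have := near_est (μ := μX) (k := fun p => ENNReal.ofReal (‖p.1‖ ^ γ)) (by fun_prop) hy1 hy2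
      hF hG (M := 0) (by filter_upwards [hF0] with v hv; rw [hv]; rfl)
    refine this.trans ?_
    simp
  have hM0 : M ≠ 0 := by
    rintro rfl
    exact hF0 (by filter_upwards [hFM] with v hv; simpa using hv)
  have hN0 : N ≠ 0 := by
    rintro rfl
    rw [zero_pow two_ne_zero, lintegral_eq_zero_iff (by fun_prop)] at hFN
    exact hF0 (by filter_upwards [hFN] with v hv; simpa using hv)
  obtain ⟨R, hR, hR1, hR2⟩ := exists_radius γ hM0 hM hN0 hN
  set P := N ^ (1 + γ / 3) * M ^ (-γ / 3)
  set S := areaS * (areaS * ENNReal.ofReal (1 / (3 + γ))) with hS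
  have hn := near_est (μ := μX) (k := fun p => nearK γ R p.1) (by fun_prop) hy1 hy2 hF hG hFM
  have hf := far_est (μ := μX) (k := ENNReal.ofReal (R ^ γ)) hW1 hW2 hW hy1 hy2 hF hG
    (h1 G hG) (h2 G hG)
  have hn' : (M * ∫⁻ p, nearK γ R p.1 ∂μX) = S * P := by
    rw [lintegral_nearK_prod γ R hγ1 hR, ← hR1, hS, div_eq_mul_one_div,
      ENNReal.ofReal_mul (by positivity)]
    ring
  rw [hn'] at hn
  rw [hFN] at hf
  have hf' : (ENNReal.ofReal (R ^ γ) * (c * ∫⁻ v, G v)) ^ 2 * N ^ 2 ≤ (c * D * (A * P)) ^ 2 := by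
    rw [← mul_pow]
    gcongr ?_ ^ 2
    calc _ ≤ ENNReal.ofReal (R ^ γ) * (c * (D * A)) * N := by gcongr
      _ = c * D * (A * (N * ENNReal.ofReal (R ^ γ))) := by ring
      _ = _ := by rw [hR2]
  have hmn : Measurable fun v => ∫⁻ p, nearK γ R p.1 * (F (v - y1 p) * G (v - y2 p)) ∂μX :=
    Measurable.lintegral_prod_right' (f := fun q : E3 × (E3 × S2) =>
      nearK γ R q.2.1 * (F (q.1 - y1 q.2) * G (q.1 - y2 q.2))) (by fun_prop)
  calc _ ≤ ∫⁻ v, 2 * ((∫⁻ p, nearK γ R p.1 * (F (v - y1 p) * G (v - y2 p)) ∂μX) ^ 2 +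
        (∫⁻ p, ENNReal.ofReal (R ^ γ) * (F (v - y1 p) * G (v - y2 p)) ∂μX) ^ 2) := by
        refine lintegral_mono fun v => ?_
        refine le_trans ?_ (add_sq_le_two _ _)
        gcongr
        rw [← lintegral_add_left (by fun_prop)]
        refine lintegral_mono fun p => ?_
        rw [← add_mul]
        gcongr
        exact kernel_le γ R hγ2 hR p.1
    _ = 2 * ((∫⁻ v, (∫⁻ p, nearK γ R p.1 * (F (v - y1 p) * G (v - y2 p)) ∂μX) ^ 2) +
        ∫⁻ v, (∫⁻ p, ENNReal.ofReal (R ^ γ) * (F (v - y1 p) * G (v - y2 p)) ∂μX) ^ 2) := by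
        rw [lintegral_const_mul' _ _ (by simp), lintegral_add_left (by fun_prop)]
    _ ≤ 2 * ((S * P) ^ 2 * A ^ 2 + (c * D * (A * P)) ^ 2) := by
        gcongr
        · exact hn.trans (by gcongr)
        · exact hf.trans hf'
    _ = 2 * ((S * (A * P)) ^ 2 + (c * D * (A * P)) ^ 2) := by ring
    _ ≤ 4 * (S * (A * P) + c * D * (A * P)) ^ 2 := by
        have : ∀ a b : ℝ≥0∞, 2 * (a ^ 2 + b ^ 2) ≤ 4 * (a + b) ^ 2 := by
          intro a b
          calc _ ≤ 2 * (a ^ 2 + b ^ 2) + (2 * (a ^ 2 + b ^ 2) + 8 * (a * b)) := le_self_add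
            _ = _ := by ring
        exact this _ _
    _ = _ := by rw [cBil]; ring

lemma vP_eq (v w : E3) (σ : S2) : vP v w σ = v - shift σ (v - w) := by
  unfold vP shift
  module

lemma vsP_eq (v w : E3) (σ : S2) : vsP v w σ = v - shift (-σ) (v - w) := by
  unfold vsP shift
  module

/-- Conservation of energy in a collision. -/
lemma norm_sq_collision (v w : E3) (σ : S2) :
    ‖vP v w σ‖ ^ 2 + ‖vsP v w σ‖ ^ 2 = ‖v‖ ^ 2 + ‖w‖ ^ 2 := by
  have h1 := parallelogram_law_with_norm ℝ ((2⁻¹ : ℝ) • (v + w)) ((‖v - w‖ / 2) • (σ : E3))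
  have h2 := parallelogram_law_with_norm ℝ v w
  rw [norm_smul (2⁻¹ : ℝ), norm_smul (‖v - w‖ / 2), norm_eq_of_mem_sphere, norm_div, norm_norm,
    norm_inv, Real.norm_two] at h1
  unfold vP vsP
  nlinarith

/-- The weight at `v` is controlled by the weights at the two post-collision velocities. -/
lemma jap_rpow_le (m : ℝ) (hm : 0 ≤ m) (v w : E3) (σ : S2) :
    jap v ^ m ≤ √2 ^ m * (jap (vP v w σ) ^ m + jap (vsP v w σ) ^ m) := by
  have h : jap v ^ 2 ≤ jap (vP v w σ) ^ 2 + jap (vsP v w σ) ^ 2 := by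
    rw [jap_sq, jap_sq, jap_sq]
    nlinarith [norm_sq_collision v w σ, sq_nonneg ‖w‖]
  have hv := jap_pos v
  have ha := jap_pos (vP v w σ)
  have hc := jap_pos (vsP v w σ)
  set a := jap (vP v w σ)
  set c := jap (vsP v w σ)
  have key : ∀ x y : ℝ, 0 < x → y ≤ x → 0 < y → jap v ^ 2 ≤ x ^ 2 + y ^ 2 →
      jap v ^ m ≤ √2 ^ m * x ^ m := by
    intro x y hx hyx hy hxy
    rw [← mul_rpow (by positivity) hx.le]
    refine rpow_le_rpow hv.le ?_ hm
    refine abs_le_of_sq_le_sq' ?_ (by positivity) |>.2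
    rw [mul_pow, Real.sq_sqrt (by norm_num)]
    nlinarith
  rcases le_total c a with h1 | h1
  · refine (key a c ha h1 hc h).trans ?_
    gcongr
    have : 0 < c ^ m := by positivity
    linarith
  · refine (key c a hc h1 ha (by linarith)).trans ?_
    gcongr
    have : 0 < a ^ m := by positivity
    linarith

/-- The cutoff kernel is bounded on all admissible values of `cos θ`. -/
lemma kernel_bound {bf : ℝ → ℝ} (hbf : gradCutoff bf) :
    ∃ B : ℝ, 0 < B ∧ ∀ v w σ, bf (cosTheta v w σ) ≤ B := by
  obtain ⟨-, -, ⟨K, hK, hb⟩, h0⟩ := hbf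
  refine ⟨K⁻¹, by positivity, fun v w σ => ?_⟩
  have h1 : cosTheta v w σ ≤ 1 :=
    (abs_le.1 (abs_cosA_le (v - w) σ (norm_eq_of_mem_sphere σ))).2
  rcases lt_or_ge (cosTheta v w σ) 0 with h | h
  · rw [h0 _ h]; positivity
  · exact (hb _ ⟨h, h1⟩).2

/-! ### Reduction of the collision operator to bilinear averages -/

/-- The bilinear averaging operator with kernel `|u| ^ γ` and displacements `y1`, `y2`. -/
def avg (γ : ℝ) (F G : E3 → ℝ≥0∞) (y1 y2 : E3 × S2 → E3) (v : E3) : ℝ≥0∞ :=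
  ∫⁻ p, ENNReal.ofReal (‖p.1‖ ^ γ) * (F (v - y1 p) * G (v - y2 p)) ∂μX

lemma measurable_avg (γ : ℝ) {F G : E3 → ℝ≥0∞} (hF : Measurable F) (hG : Measurable G)
    {y1 y2 : E3 × S2 → E3} (hy1 : Measurable y1) (hy2 : Measurable y2) :
    Measurable (avg γ F G y1 y2) :=
  Measurable.lintegral_prod_right' (f := fun q : E3 × (E3 × S2) =>
    ENNReal.ofReal (‖q.2.1‖ ^ γ) * (F (q.1 - y1 q.2) * G (q.1 - y2 q.2))) (by fun_prop)

/-- Passage from `v*` to the relative velocity `u = v - v*`. -/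
lemma lintegral_relative {Φ : E3 × S2 → ℝ≥0∞} (hΦ : Measurable Φ) (v : E3) :
    ∫⁻ w : E3, ∫⁻ σ : S2, Φ (v - w, σ) = ∫⁻ p, Φ p ∂μX := by
  rw [lintegral_prod _ hΦ.aemeasurable]
  exact lintegral_sub_left_eq_self (fun u => ∫⁻ σ : S2, Φ (u, σ)) v

/-- The weighted density `⟨v⟩ ^ a |f v|`, as an extended nonnegative number. -/
def wd (a : ℝ) (f : E3 → ℝ) (v : E3) : ℝ≥0∞ := ENNReal.ofReal (jap v ^ a * |f v|)

lemma measurable_wd (a : ℝ) {f : E3 → ℝ} (hf : Measurable f) : Measurable (wd a f) := by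
  have := measurable_jap
  unfold wd
  fun_prop

lemma enorm_eq_wd (a : ℝ) (f : E3 → ℝ) (v : E3) : ‖jap v ^ a * f v‖ₑ = wd a f v := by
  rw [wd, Real.enorm_eq_ofReal_abs, abs_mul, abs_of_pos (rpow_pos_of_pos (jap_pos v) a)]

/-- Displacement `v - v'` (for `s = 1`) or `v - v*'` (for `s = -1`). -/
def disp (s : ℝ) (p : E3 × S2) : E3 := shift (s • (p.2 : E3)) p.1

lemma measurable_disp (s : ℝ) : Measurable (disp s) := by
  unfold disp
  fun_prop

/-- The weighted gain term is dominated by two bilinear averages, one for each post-collision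
velocity that can carry the weight `⟨·⟩ ^ l`. No integrability of the collision integrand is
needed: a non-integrable Bochner integral is zero. -/
lemma enorm_gain_le (γ l k : ℝ) (hl : 0 ≤ l) (hk : 0 ≤ k) {bf : ℝ → ℝ} (hb0 : ∀ t, 0 ≤ bf t)
    {B : ℝ} (hB : 0 < B) (hb : ∀ v w σ, bf (cosTheta v w σ) ≤ B) {f : E3 → ℝ} (hf : Measurable f)
    (v : E3) :
    ‖jap v ^ l * (jap v ^ k *
      Qgain γ bf (fun u => jap u ^ (-k) * f u) (fun u => jap u ^ (-k) * f u) v)‖ₑ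
      ≤ ENNReal.ofReal (B * √2 ^ (l + k)) *
        (avg γ (wd l f) (wd (-k) f) (disp (-1)) (disp 1) v +
          avg γ (wd l f) (wd (-k) f) (disp 1) (disp (-1)) v) := by
  have hF := measurable_wd l hf
  have hG := measurable_wd (-k) hf
  have hd1 := measurable_disp 1
  have hd2 := measurable_disp (-1)
  have hreal : ∀ w σ, (jap v ^ l * jap v ^ k) * |‖v - w‖ ^ γ * bf (cosTheta v w σ) *
      (jap (vsP v w σ) ^ (-k) * f (vsP v w σ) * (jap (vP v w σ) ^ (-k) * f (vP v w σ)))|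
      ≤ B * √2 ^ (l + k) * (‖v - w‖ ^ γ *
        ((jap (vsP v w σ) ^ l * |f (vsP v w σ)|) * (jap (vP v w σ) ^ (-k) * |f (vP v w σ)|) +
        (jap (vP v w σ) ^ l * |f (vP v w σ)|) * (jap (vsP v w σ) ^ (-k) * |f (vsP v w σ)|))) := by
    intro w σ
    have h := jap_rpow_le (l + k) (by linarith) v w σ
    have hbB := hb v w σ
    have ha := jap_pos (vP v w σ)
    have hc := jap_pos (vsP v w σ)
    set a := jap (vP v w σ)
    set c := jap (vsP v w σ)
    have hbn := hb0 (cosTheta v w σ)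
    have hn : 0 ≤ ‖v - w‖ ^ γ := rpow_nonneg (norm_nonneg _) _
    rw [← rpow_add (jap_pos v)]
    rw [abs_mul, abs_mul, abs_mul, abs_mul, abs_mul, abs_of_nonneg hn, abs_of_nonneg hbn,
      abs_of_pos (rpow_pos_of_pos ha _), abs_of_pos (rpow_pos_of_pos hc _)]
    have e1 : a ^ (l + k) * a ^ (-k) = a ^ l := by
      rw [← rpow_add ha]; congr 1; ring
    have e2 : c ^ (l + k) * c ^ (-k) = c ^ l := by
      rw [← rpow_add hc]; congr 1; ring
    set x := |f (vP v w σ)|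
    set y := |f (vsP v w σ)|
    have hx : 0 ≤ x := abs_nonneg _
    have hy : 0 ≤ y := abs_nonneg _
    calc _ ≤ (√2 ^ (l + k) * (a ^ (l + k) + c ^ (l + k))) *
          (‖v - w‖ ^ γ * B * (c ^ (-k) * y * (a ^ (-k) * x))) := by gcongr
      _ = B * √2 ^ (l + k) * (‖v - w‖ ^ γ * ((c ^ (l + k) * c ^ (-k)) * y * (a ^ (-k) * x) +
          (a ^ (l + k) * a ^ (-k)) * x * (c ^ (-k) * y))) := by ring
      _ = _ := by rw [e1, e2]
  rw [← mul_assoc, enorm_mul, Qgain]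
  have hΦ : Measurable fun p : E3 × S2 => ENNReal.ofReal (‖p.1‖ ^ γ) *
      (wd l f (v - disp (-1) p) * wd (-k) f (v - disp 1 p)) := by fun_prop
  have hΨ : Measurable fun p : E3 × S2 => ENNReal.ofReal (‖p.1‖ ^ γ) *
      (wd l f (v - disp 1 p) * wd (-k) f (v - disp (-1) p)) := by fun_prop
  have hS : Measurable fun p : E3 × S2 => ENNReal.ofReal (‖p.1‖ ^ γ) *
      (wd l f (v - disp (-1) p) * wd (-k) f (v - disp 1 p)) + ENNReal.ofReal (‖p.1‖ ^ γ) *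
      (wd l f (v - disp 1 p) * wd (-k) f (v - disp (-1) p)) := hΦ.add hΨ
  rw [avg, avg, ← lintegral_add_left hΦ, ← lintegral_const_mul _ hS,
    ← lintegral_relative (hS.const_mul _) v]
  calc _ ≤ ‖jap v ^ l * jap v ^ k‖ₑ * ∫⁻ w, ∫⁻ σ : S2, ‖‖v - w‖ ^ γ * bf (cosTheta v w σ) *
      (jap (vsP v w σ) ^ (-k) * f (vsP v w σ) * (jap (vP v w σ) ^ (-k) * f (vP v w σ)))‖ₑ := by
        gcongr
        refine (enorm_integral_le_lintegral_enorm _).trans (lintegral_mono fun w => ?_)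
        exact enorm_integral_le_lintegral_enorm _
    _ = ∫⁻ w, ∫⁻ σ : S2, ‖jap v ^ l * jap v ^ k‖ₑ * ‖‖v - w‖ ^ γ * bf (cosTheta v w σ) *
      (jap (vsP v w σ) ^ (-k) * f (vsP v w σ) * (jap (vP v w σ) ^ (-k) * f (vP v w σ)))‖ₑ := by
        rw [← lintegral_const_mul' _ _ enorm_ne_top]
        refine lintegral_congr fun w => ?_
        rw [← lintegral_const_mul' _ _ enorm_ne_top]
    _ ≤ _ := by
        refine lintegral_mono fun w => lintegral_mono fun σ => ?_
        have e1 : v - disp 1 (v - w, σ) = vP v w σ := by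
          rw [vP_eq, disp, one_smul]
        have e2 : v - disp (-1) (v - w, σ) = vsP v w σ := by
          rw [vsP_eq, disp, neg_one_smul]
        have hn : 0 ≤ ‖v - w‖ ^ γ := rpow_nonneg (norm_nonneg _) _
        have hp : ∀ (a : ℝ) (x : E3), 0 ≤ jap x ^ a * |f x| := fun a x =>
          mul_nonneg (rpow_nonneg (jap_pos x).le _) (abs_nonneg _)
        dsimp only
        rw [e1, e2, ← mul_add]
        simp only [wd]
        rw [← ENNReal.ofReal_mul (hp _ _), ← ENNReal.ofReal_mul (hp _ _),
          ← ENNReal.ofReal_add (mul_nonneg (hp _ _) (hp _ _)) (mul_nonneg (hp _ _) (hp _ _)),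
          ← ENNReal.ofReal_mul hn, ← ENNReal.ofReal_mul (by positivity),
          Real.enorm_eq_ofReal (mul_nonneg (rpow_nonneg (jap_pos v).le _)
            (rpow_nonneg (jap_pos v).le _)), Real.enorm_eq_ofReal_abs,
          ← ENNReal.ofReal_mul (mul_nonneg (rpow_nonneg (jap_pos v).le _)
            (rpow_nonneg (jap_pos v).le _))]
        exact ENNReal.ofReal_le_ofReal (hreal w σ)

lemma enorm_loss_le (γ l k : ℝ) {bf : ℝ → ℝ} (hb0 : ∀ t, 0 ≤ bf t)
    {B : ℝ} (hB : 0 < B) (hb : ∀ v w σ, bf (cosTheta v w σ) ≤ B) {f : E3 → ℝ} (hf : Measurable f)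
    (v : E3) :
    ‖jap v ^ l * (jap v ^ k *
      Qloss γ bf (fun u => jap u ^ (-k) * f u) (fun u => jap u ^ (-k) * f u) v)‖ₑ
      ≤ ENNReal.ofReal B * avg γ (wd l f) (wd (-k) f) (fun _ => 0) (fun p => p.1) v := by
  have hF := measurable_wd l hf
  have hG := measurable_wd (-k) hf
  have hΦ : Measurable fun p : E3 × S2 => ENNReal.ofReal (‖p.1‖ ^ γ) *
      (wd l f (v - 0) * wd (-k) f (v - p.1)) := by fun_prop
  rw [← mul_assoc, enorm_mul, Qloss, avg, ← lintegral_const_mul _ hΦ,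
    ← lintegral_relative (hΦ.const_mul _) v]
  calc _ ≤ ‖jap v ^ l * jap v ^ k‖ₑ * ∫⁻ w, ∫⁻ σ : S2, ‖‖v - w‖ ^ γ * bf (cosTheta v w σ) *
      (jap w ^ (-k) * f w * (jap v ^ (-k) * f v))‖ₑ := by
        gcongr
        refine (enorm_integral_le_lintegral_enorm _).trans (lintegral_mono fun w => ?_)
        exact enorm_integral_le_lintegral_enorm _
    _ = ∫⁻ w, ∫⁻ σ : S2, ‖jap v ^ l * jap v ^ k‖ₑ * ‖‖v - w‖ ^ γ * bf (cosTheta v w σ) *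
      (jap w ^ (-k) * f w * (jap v ^ (-k) * f v))‖ₑ := by
        rw [← lintegral_const_mul' _ _ enorm_ne_top]
        refine lintegral_congr fun w => ?_
        rw [← lintegral_const_mul' _ _ enorm_ne_top]
    _ ≤ _ := by
        refine lintegral_mono fun w => lintegral_mono fun σ => ?_
        have hn : 0 ≤ ‖v - w‖ ^ γ := rpow_nonneg (norm_nonneg _) _
        have hv := jap_pos v
        have hw := jap_pos w
        dsimp only
        rw [sub_zero, sub_sub_cancel]
        simp only [wd]
        rw [← ENNReal.ofReal_mul (by positivity),
          ← ENNReal.ofReal_mul hn, ← ENNReal.ofReal_mul (by positivity),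
          ← enorm_mul, Real.enorm_eq_ofReal_abs]
        refine ENNReal.ofReal_le_ofReal ?_
        have hbB := hb v w σ
        have hbn := hb0 (cosTheta v w σ)
        have e : jap v ^ k * jap v ^ (-k) = 1 := by
          rw [← rpow_add hv, add_neg_cancel, rpow_zero]
        simp only [abs_mul]
        rw [abs_of_nonneg hn, abs_of_nonneg hbn, abs_of_pos (rpow_pos_of_pos hv _),
          abs_of_pos (rpow_pos_of_pos hv _), abs_of_pos (rpow_pos_of_pos hv _),
          abs_of_pos (rpow_pos_of_pos hw _)]
        calc _ = (jap v ^ k * jap v ^ (-k)) * (bf (cosTheta v w σ) * (‖v - w‖ ^ γ *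
              (jap v ^ l * |f v| * (jap w ^ (-k) * |f w|)))) := by ring
          _ ≤ _ := by
              rw [e, one_mul]
              gcongr

/-! ### Norms of the weighted densities -/

/-- `‖⟨·⟩ ^ (-k)‖²` in `L²(ℝ³)`. -/
def decay (k : ℝ) : ℝ≥0∞ := ∫⁻ v : E3, ENNReal.ofReal (jap v ^ (-(2 * k)))

lemma decay_lt_top {k : ℝ} (hk : 3 / 2 < k) : decay k < ⊤ := by
  have h := integrable_rpow_neg_one_add_norm_sq (E := E3) (μ := volume) (r := 2 * k)
    (by simp; linarith)
  have e : ∀ v : E3, jap v ^ (-(2 * k)) = (1 + ‖v‖ ^ 2) ^ (-(2 * k) / 2) := by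
    intro v
    rw [jap, Real.sqrt_eq_rpow, ← rpow_mul (by positivity)]
    congr 1; ring
  unfold decay
  simp_rw [e]
  exact h.lintegral_lt_top

lemma eLpNorm_two_sq (g : E3 → ℝ) : eLpNorm g 2 volume ^ 2 = ∫⁻ v, ‖g v‖ₑ ^ 2 := by
  have := eLpNorm_nnreal_pow_eq_lintegral (f := g) (μ := (volume : Measure E3)) (p := 2) (by simp)
  simpa using this

lemma lintegral_wd_neg_sq_le {k : ℝ} (hk : 0 ≤ k) (f : E3 → ℝ) :
    ∫⁻ v, wd (-k) f v ^ 2 ≤ eLpNorm f 2 volume ^ 2 := by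
  rw [eLpNorm_two_sq]
  refine lintegral_mono fun v => ?_
  dsimp only
  rw [Real.enorm_eq_ofReal_abs, wd]
  gcongr
  have : jap v ^ (-k) ≤ 1 := rpow_le_one_of_one_le_of_nonpos (one_le_jap v) (by linarith)
  nlinarith [abs_nonneg (f v)]

lemma lintegral_wd_neg_le (k : ℝ) {f : E3 → ℝ} (hf : Measurable f) :
    ∫⁻ v, wd (-k) f v ≤ decay k ^ (1 / 2 : ℝ) * eLpNorm f 2 volume := by
  have hj := measurable_jap
  have h : (∫⁻ v, wd (-k) f v) ^ 2 ≤ decay k * ∫⁻ v, ‖f v‖ₑ ^ 2 := by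
    refine sq_lintegral_le (by fun_prop) (by fun_prop) (Filter.Eventually.of_forall fun v => ?_)
    have hv := jap_pos v
    rw [Real.enorm_eq_ofReal_abs, wd, ENNReal.ofReal_mul (by positivity), mul_pow,
      ← ENNReal.ofReal_pow (by positivity) 2, ← rpow_mul_natCast hv.le]
    apply le_of_eq
    congr 3
    push_cast; ring
  rw [← eLpNorm_two_sq] at h
  refine (ENNReal.pow_le_pow_left_iff two_ne_zero).1 (h.trans (le_of_eq ?_))
  rw [mul_pow, ← ENNReal.rpow_mul_natCast]
  norm_num

/-! ### Estimates of the gain and loss averages -/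

/-- Common constant in the weighted integral bounds for the gain and loss displacements. -/
def cW : ℝ≥0∞ := 8 * (3 * boxInt ![1 / 2, 0, 0]) + 3 * boxInt ![0, 3 / 4, 3 / 4] + areaS

lemma cW_lt_top : cW < ⊤ := by
  have h1 : boxInt ![1 / 2, 0, 0] < ⊤ := boxInt_lt_top _ (by
    intro i; fin_cases i <;> norm_num)
  have h2 : boxInt ![0, 3 / 4, 3 / 4] < ⊤ := boxInt_lt_top _ (by
    intro i; fin_cases i <;> norm_num)
  unfold cW
  have := areaS_lt_top
  finiteness

section Estimates

variable {γ : ℝ} {F G : E3 → ℝ≥0∞} {A M N D : ℝ≥0∞}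

/-- For the gain displacements, `y2 - y1 = -|u| s σ`. -/
lemma avg_gain_est (hγ1 : -3 < γ) (hγ2 : γ < 0) (s : ℝ) (hs : |s| = 1)
    (hF : Measurable F) (hG : Measurable G)
    (hFM : ∀ᵐ v, F v ≤ M) (hM : M ≠ ⊤) (hN : N ≠ ⊤) (hFN : ∫⁻ v, F v ^ 2 = N ^ 2)
    (hG2 : ∫⁻ v, G v ^ 2 ≤ A ^ 2) (hG1 : ∫⁻ v, G v ≤ D * A) :
    ∫⁻ v, avg γ F G (disp (-s)) (disp s) v ^ 2
      ≤ (cBil γ cW D * (A * (N ^ (1 + γ / 3) * M ^ (-γ / 3)))) ^ 2 := by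
  refine bilinear_est γ hγ1 hγ2 (measurable_wt (3 / 4) s) (measurable_wt (-(3 / 4)) s)
    (ae_wt s hs) (measurable_disp _) (measurable_disp _) ?_ ?_ hF hG hFM hM hN hFN hG2 hG1
  · intro H hH z
    refine (lintegral_wt_shift s hs H hH z).trans ?_
    gcongr
    rw [cW, add_assoc]
    exact le_self_add
  · intro H hH z
    have e : ∀ p : E3 × S2, z - (disp s p - disp (-s) p) = z + ‖p.1‖ • s • (p.2 : E3) := by
      intro p
      unfold disp shift
      module
    simp_rw [e]
    refine (lintegral_wt_neg s hs H hH z).trans ?_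
    gcongr
    rw [cW, add_right_comm]
    exact le_add_self

lemma avg_loss_est (hγ1 : -3 < γ) (hγ2 : γ < 0)
    (hF : Measurable F) (hG : Measurable G)
    (hFM : ∀ᵐ v, F v ≤ M) (hM : M ≠ ⊤) (hN : N ≠ ⊤) (hFN : ∫⁻ v, F v ^ 2 = N ^ 2)
    (hG2 : ∫⁻ v, G v ^ 2 ≤ A ^ 2) (hG1 : ∫⁻ v, G v ≤ D * A) :
    ∫⁻ v, avg γ F G (fun _ => 0) (fun p => p.1) v ^ 2
      ≤ (cBil γ cW D * (A * (N ^ (1 + γ / 3) * M ^ (-γ / 3)))) ^ 2 := by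
  have h : ∀ H : E3 → ℝ≥0∞, Measurable H → ∀ z,
      ∫⁻ p : E3 × S2, 1 * H (z - p.1) ∂μX ≤ cW * ∫⁻ v, H v := by
    intro H hH z
    simp_rw [one_mul]
    rw [lintegral_prod _ (by fun_prop)]
    simp only [lintegral_const]
    rw [lintegral_mul_const _ (by fun_prop), lintegral_sub_left_eq_self H z, mul_comm]
    gcongr
    exact le_add_self
  refine bilinear_est γ hγ1 hγ2 (W1 := fun _ => 1) (W2 := fun _ => 1) (by fun_prop) (by fun_prop)
    (by simp) (by fun_prop) (by fun_prop) h ?_ hF hG hFM hM hN hFN hG2 hG1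
  intro H hH z
  simpa using h H hH z

end Estimates

/-! ### The weighted bound for the collision operator -/

/-- weighted L² bound for the nonlinear term,
‖⟨·⟩^l Γ_k(f,f)‖_{L²} ≤ C ‖f‖_{L²} ‖⟨·⟩^l f‖_{L²}^{1+γ/3} ‖⟨·⟩^l f‖_{L^∞}^{-γ/3}. -/
theorem stmt19 (γ l k : ℝ) (hγ1 : -3 < γ) (hγ2 : γ < 0) (hl : 2 ≤ l) (hk : 3 ≤ k)
    (bf : ℝ → ℝ) (hbf : gradCutoff bf) :
    ∃ C : ℝ, 0 < C ∧ ∀ f : E3 → ℝ, Measurable f →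
      eLpNorm f 2 volume < ⊤ →
      eLpNorm (fun v : E3 => jap v ^ l * f v) 2 volume < ⊤ →
      eLpNorm (fun v : E3 => jap v ^ l * f v) ⊤ volume < ⊤ →
      eLpNorm (fun v : E3 => jap v ^ l * GammaFull γ bf k f v) 2 volume ≤
        ENNReal.ofReal C * eLpNorm f 2 volume *
          eLpNorm (fun v : E3 => jap v ^ l * f v) 2 volume ^ (1 + γ / 3) *
          eLpNorm (fun v : E3 => jap v ^ l * f v) ⊤ volume ^ (-γ / 3) := by
  obtain ⟨B, hB, hb⟩ := kernel_bound hbf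
  set D := decay k ^ (1 / 2 : ℝ) with hD
  have hDt : D < ⊤ := ENNReal.rpow_lt_top_of_nonneg (by norm_num) (decay_lt_top (by linarith)).ne
  set c1 := ENNReal.ofReal (B * √2 ^ (l + k)) with hc1
  set Q := 4 * c1 * cBil γ cW D with hQ
  have hQt : Q < ⊤ := by
    have := areaS_lt_top
    have := cW_lt_top
    rw [hQ, hc1, cBil]
    finiteness
  refine ⟨Q.toReal + 1, by positivity, fun f hf hA hN hM => ?_⟩
  set A := eLpNorm f 2 volume
  set N := eLpNorm (fun v : E3 => jap v ^ l * f v) 2 volume with hNdef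
  set M := eLpNorm (fun v : E3 => jap v ^ l * f v) ⊤ volume with hMdef
  have hF := measurable_wd l hf
  have hG := measurable_wd (-k) hf
  have hFM : ∀ᵐ v, wd l f v ≤ M := by
    filter_upwards [ae_le_eLpNormEssSup (f := fun v : E3 => jap v ^ l * f v)
      (μ := volume)] with v hv
    rw [hMdef, eLpNorm_exponent_top, ← enorm_eq_wd]
    exact hv
  have hFN : ∫⁻ v, wd l f v ^ 2 = N ^ 2 := by
    rw [hNdef, eLpNorm_two_sq]
    simp_rw [enorm_eq_wd]
  have hG2 := lintegral_wd_neg_sq_le (k := k) (by linarith) f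
  have hG1 := lintegral_wd_neg_le k hf
  set P := cBil γ cW D * (A * (N ^ (1 + γ / 3) * M ^ (-γ / 3))) with hP
  have t1 := avg_gain_est hγ1 hγ2 1 (by simp) hF hG hFM hM.ne hN.ne hFN hG2 hG1
  have t2 := avg_gain_est hγ1 hγ2 (-1) (by simp) hF hG hFM hM.ne hN.ne hFN hG2 hG1
  have t3 := avg_loss_est hγ1 hγ2 hF hG hFM hM.ne hN.ne hFN hG2 hG1
  rw [neg_neg] at t2
  set T1 := avg γ (wd l f) (wd (-k) f) (disp (-1)) (disp 1)
  set T2 := avg γ (wd l f) (wd (-k) f) (disp 1) (disp (-1))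
  set T3 := avg γ (wd l f) (wd (-k) f) (fun _ => 0) (fun p => p.1)
  have m1 : Measurable T1 := measurable_avg γ hF hG (measurable_disp _) (measurable_disp _)
  have m2 : Measurable T2 := measurable_avg γ hF hG (measurable_disp _) (measurable_disp _)
  have hBc : ENNReal.ofReal B ≤ c1 := by
    refine ENNReal.ofReal_le_ofReal ?_
    have : 1 ≤ √2 ^ (l + k) := one_le_rpow (by rw [Real.one_le_sqrt]; norm_num) (by linarith)
    nlinarith
  have hpt : ∀ v, ‖jap v ^ l * GammaFull γ bf k f v‖ₑ ≤ c1 * ((T1 v + T2 v) + T3 v) := by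
    intro v
    rw [GammaFull, mul_sub, mul_sub, mul_add]
    refine (enorm_sub_le).trans (add_le_add ?_ ?_)
    · exact enorm_gain_le γ l k (by linarith) (by linarith) hbf.2.1 hB hb hf v
    · refine (enorm_loss_le γ l k hbf.2.1 hB hb hf v).trans ?_
      gcongr
  have hsq : ∫⁻ v, ‖jap v ^ l * GammaFull γ bf k f v‖ₑ ^ 2 ≤ (4 * c1 * P) ^ 2 := by
    calc _ ≤ ∫⁻ v, c1 ^ 2 * (2 * (2 * (T1 v ^ 2 + T2 v ^ 2) + T3 v ^ 2)) := by
          refine lintegral_mono fun v => ?_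
          dsimp only
          calc _ ≤ (c1 * ((T1 v + T2 v) + T3 v)) ^ 2 := by gcongr; exact hpt v
            _ ≤ c1 ^ 2 * (2 * ((T1 v + T2 v) ^ 2 + T3 v ^ 2)) := by
                rw [mul_pow]
                gcongr
                exact add_sq_le_two _ _
            _ ≤ _ := by
                gcongr
                exact add_sq_le_two _ _
      _ = c1 ^ 2 * (2 * (2 * ((∫⁻ v, T1 v ^ 2) + ∫⁻ v, T2 v ^ 2) + ∫⁻ v, T3 v ^ 2)) := by
          rw [lintegral_const_mul' _ _ (by finiteness), lintegral_const_mul' _ _ (by simp),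
            lintegral_add_left (by fun_prop), lintegral_const_mul' _ _ (by simp),
            lintegral_add_left (by fun_prop)]
      _ ≤ c1 ^ 2 * (2 * (2 * (P ^ 2 + P ^ 2) + P ^ 2)) := by gcongr
      _ ≤ c1 ^ 2 * (2 * (2 * (P ^ 2 + P ^ 2) + P ^ 2)) + 6 * (c1 * P) ^ 2 := le_self_add
      _ = _ := by ring
  rw [← eLpNorm_two_sq] at hsq
  calc _ ≤ 4 * c1 * P := (ENNReal.pow_le_pow_left_iff two_ne_zero).1 hsq
    _ = Q * A * N ^ (1 + γ / 3) * M ^ (-γ / 3) := by rw [hP, hQ]; ring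
    _ ≤ _ := by
        gcongr
        rw [← ENNReal.ofReal_toReal hQt.ne]
        refine ENNReal.ofReal_le_ofReal ?_
        rw [ENNReal.toReal_ofReal ENNReal.toReal_nonneg]
        linarith

end
end
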